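/- arXiv:1309.6506 — 6 statements merged into one kernel-verified Lean document; each statement's English description precedes it below -/
import Mathlib

section
/- Let r, v, k be integers with r ≥ 2 and (k+2r)/2 ≤ v ≤ k+r−2, and let C = (k+r−v−1)^{1/⌊k/(k+r−v)⌋} (a real number). Then there exists a constant D such that for every integer n ≥ k, f^{(r)}(n,v,k) ≤ (2C/r!)·n^{r−1+1/⌊k/(k+r−v)⌋} + D·n^{r−1}. -/
/-- `f^{(r)}(n,v,k)`: one plus the maximum number of edges of an `r`-uniform hypergraph
on `n` vertices in which every `k` pairwise distinct edges cover at least `v + 1`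
vertices. -/
noncomputable def fBES (n r k : ℕ) (v : ℤ) : ℕ :=
  sSup {m | ∃ E : Finset (Finset (Fin n)),
    (∀ e ∈ E, e.card = r) ∧
    (∀ E' ⊆ E, E'.card = k → v + 1 ≤ ((E'.biUnion id).card : ℤ)) ∧ E.card = m} + 1
open SimpleGraph

/-- ear counting -/
lemma ear_count {V : Type*} [DecidableEq V] {G : SimpleGraph V} (W : Finset V)
    (F : Finset (Sym2 V)) (hF : ∀ e ∈ F, ∀ a ∈ e, a ∈ W) {u v : V} (p : G.Walk u v) (hv : v ∈ W) :
    (p.support.tail.countP (fun a => !decide (a ∈ W)) +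
      (if u ∈ W then (if ∃ e ∈ p.edges, e ∉ F then 1 else 0) else 1)
      ≤ p.edges.countP (fun e => !decide (e ∈ F))) := by
  induction p with
  | nil => simp [hv]
  | @cons u u' v h p ih =>
    have ih := ih hv
    have hs : p.support = u' :: p.support.tail := by
      cases p <;> simp
    simp only [Walk.support_cons, List.tail_cons, Walk.edges_cons, List.countP_cons]
    rw [hs, List.countP_cons]
    by_cases h1 : u ∈ W <;> by_cases h2 : u' ∈ W
    · simp only [h1, h2, if_true] at ih ⊢
      by_cases h3 : s(u,u') ∈ F
      · simpa [h3] using ih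
      · simp only [h3, List.mem_cons]
        simp 
        split_ifs at ih ⊢ <;> omega
    · have h3 : s(u,u') ∉ F := fun h => h2 (hF _ h u' (by simp))
      simp only [h1, h2, h3] at ih ⊢
      simp at ih ⊢
      split_ifs at ih ⊢ <;> omega
    · have h3 : s(u,u') ∉ F := fun h => h1 (hF _ h u (by simp))
      simp only [h1, h2, h3] at ih ⊢
      simp at ih ⊢
      split_ifs at ih ⊢ <;> omega
    · have h3 : s(u,u') ∉ F := fun h => h1 (hF _ h u (by simp))
      simp only [h1, h2, h3] at ih ⊢
      simp at ih ⊢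
      omega

/-- stage -/
def BStage {V : Type*} (G : SimpleGraph V) (W : Finset V) (F : Finset (Sym2 V)) : Prop :=
  ∀ e ∈ F, e ∈ G.edgeSet ∧ ∀ a ∈ e, a ∈ W

lemma ear {V : Type*} [DecidableEq V] {G : SimpleGraph V} (W : Finset V)
    (F : Finset (Sym2 V)) (hF : BStage G W F) {u v : V} (p : G.Walk u v)
    (hu : u ∈ W) (hv : v ∈ W) (hp : p.IsTrail) (hnew : ∃ e ∈ p.edges, e ∉ F) :
    BStage G (W ∪ p.support.toFinset) (F ∪ p.edges.toFinset) ∧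
    F.card + (W ∪ p.support.toFinset).card + 1 ≤ (F ∪ p.edges.toFinset).card + W.card ∧
    (W ∪ p.support.toFinset).card + 1 ≤ W.card + p.length := by
  have h0 := ear_count W F (fun e he => (hF e he).2) p hv
  rw [if_pos hu, if_pos hnew] at h0
  have hs : p.support = u :: p.support.tail := by
      cases p <;> simp
  have hW : W ∪ p.support.toFinset = W ∪ (p.support.tail.filter (fun a => !decide (a ∈ W))).toFinset := by
    ext a
    have h1 : a ∈ p.support ↔ a = u ∨ a ∈ p.support.tail := by
      conv_lhs => rw [hs]
      exact List.mem_cons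
    by_cases haW : a ∈ W
    · simp [haW]
    · have : a ≠ u := fun h => haW (h ▸ hu)
      simp [haW, h1, this]
  have hE : F ∪ p.edges.toFinset = F ∪ (p.edges.filter (fun a => !decide (a ∈ F))).toFinset := by
    ext a
    by_cases haF : a ∈ F <;> simp [haF]
  have hWc : (W ∪ p.support.toFinset).card ≤ W.card + p.support.tail.countP (fun a => !decide (a ∈ W)) := by
    rw [hW]
    refine (Finset.card_union_le _ _).trans ?_
    rw [List.countP_eq_length_filter]
    gcongr
    exact List.toFinset_card_le _
  have hEc : (F ∪ p.edges.toFinset).card = F.card + p.edges.countP (fun a => !decide (a ∈ F)) := by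
    rw [hE, Finset.card_union_of_disjoint, List.countP_eq_length_filter, List.toFinset_card_of_nodup]
    · exact hp.edges_nodup.filter _
    · rw [Finset.disjoint_left]
      intro a ha
      simp [ha]
  refine ⟨?_, by omega, ?_⟩
  · intro e he
    rw [Finset.mem_union] at he
    rcases he with he | he
    · exact ⟨(hF e he).1, fun a ha => Finset.mem_union_left _ ((hF e he).2 a ha)⟩
    · rw [List.mem_toFinset] at he
      refine ⟨p.edges_subset_edgeSet he, fun a ha => Finset.mem_union_right _ ?_⟩
      rw [List.mem_toFinset]
      induction e with | _ x y =>
      rcases Sym2.mem_iff.1 ha with rfl | rfl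
      · exact p.fst_mem_support_of_mem_edges he
      · exact p.snd_mem_support_of_mem_edges he
  · have hpos : 0 < p.length := by
      obtain ⟨e, he, -⟩ := hnew
      rw [← p.length_edges]
      exact List.length_pos_of_mem he
    have : p.support.tail.countP (fun a => !decide (a ∈ W)) < p.support.tail.length := by
      rw [lt_iff_le_and_ne]
      refine ⟨List.countP_le_length, fun h => ?_⟩
      rw [List.countP_eq_length] at h
      have hvt : v ∈ p.support.tail := by
        cases p with
        | nil => simp at hpos
        | cons h p => simp
      simpa [hv] using h v hvt
    simp at this
    omega

def NoShort {V : Type*} (G : SimpleGraph V) (t : ℕ) : Prop :=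
  ∀ (z : V) (c : G.Walk z z), c.IsCycle → t < c.length

lemma path_eq {V : Type*} {G : SimpleGraph V} {t : ℕ} (hG : NoShort G t) {u v : V}
    (P Q : G.Walk u v) (hP : P.IsPath) (hQ : Q.IsPath) (h : P.length + Q.length ≤ t) : P = Q := by
  classical
  by_contra hne
  let H : SimpleGraph V := SimpleGraph.fromEdgeSet {e | e ∈ P.edges ∨ e ∈ Q.edges}
  have hPH : ∀ e ∈ P.edges, e ∈ H.edgeSet := fun e he => by
    rw [SimpleGraph.edgeSet_fromEdgeSet]
    exact ⟨Or.inl he, G.not_isDiag_of_mem_edgeSet (P.edges_subset_edgeSet he)⟩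
  have hQH : ∀ e ∈ Q.edges, e ∈ H.edgeSet := fun e he => by
    rw [SimpleGraph.edgeSet_fromEdgeSet]
    exact ⟨Or.inr he, G.not_isDiag_of_mem_edgeSet (Q.edges_subset_edgeSet he)⟩
  have hH : ¬ H.IsAcyclic := by
    intro hA
    have := (hA.subsingleton_path u v).elim ⟨P.transfer H hPH, hP.transfer hPH⟩ ⟨Q.transfer H hQH, hQ.transfer hQH⟩
    have h2 : P.transfer H hPH = Q.transfer H hQH := congrArg Subtype.val this
    have h3 := congrArg Walk.support h2
    rw [Walk.support_transfer, Walk.support_transfer] at h3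
    exact hne (Walk.ext_support h3)
  unfold SimpleGraph.IsAcyclic at hH
  push Not at hH
  obtain ⟨z, c, hc⟩ := hH
  have hcG : ∀ e ∈ c.edges, e ∈ P.edges ∨ e ∈ Q.edges := fun e he => by
    have := c.edges_subset_edgeSet he
    rw [SimpleGraph.edgeSet_fromEdgeSet] at this
    exact this.1
  have hcG' : ∀ e ∈ c.edges, e ∈ G.edgeSet := fun e he => by
    rcases hcG e he with h | h
    · exact P.edges_subset_edgeSet h
    · exact Q.edges_subset_edgeSet h
  have h1 := hG z (c.transfer G hcG') (hc.transfer hcG')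
  rw [Walk.length_transfer] at h1
  have h2 : c.edges.toFinset.card = c.length := by
    rw [List.toFinset_card_of_nodup hc.1.1.edges_nodup, Walk.length_edges]
  have h3 : c.edges.toFinset ⊆ (P.edges ++ Q.edges).toFinset := by
    intro e he
    simp at he ⊢
    exact hcG e he
  have h4 := Finset.card_le_card h3
  have h5 := List.toFinset_card_le (P.edges ++ Q.edges)
  simp at h5
  simp at h4
  omega

lemma split_unique {V : Type*} {G : SimpleGraph V} {t : ℕ} (hG : NoShort G t) {x y z : V}
    (A A' : G.Walk x z) (B B' : G.Walk z y) (hP : (A.append B).IsPath) (hQ : (A'.append B').IsPath)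
    (hPl : (A.append B).length = t) (hQl : (A'.append B').length = t) :
    A.length = A'.length ∧ (2 * A.length ≤ t → A = A') ∧ (t ≤ 2 * A.length → B = B') := by
  rw [Walk.length_append] at hPl hQl
  have hA := hP.of_append_left
  have hB := hP.of_append_right
  have hA' := hQ.of_append_left
  have hB' := hQ.of_append_right
  have hl : A.length = A'.length := by
    by_cases h : A.length + A'.length ≤ t
    · rw [path_eq hG A A' hA hA' h]
    · have := path_eq hG B B' hB hB' (by omega)
      rw [this] at hPl
      omega
  exact ⟨hl, fun h => path_eq hG A A' hA hA' (by omega), fun h => path_eq hG B B' hB hB' (by omega)⟩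

lemma split_at {V : Type*} {G : SimpleGraph V} {x y : V} (P : G.Walk x y) (m : ℕ) (hm : m < P.length) :
    ∃ (z z' : V) (h : G.Adj z z') (A : G.Walk x z) (B : G.Walk z' y),
      P = A.append (Walk.cons h B) ∧ A.length = m := by
  induction P generalizing m with
  | nil => simp at hm
  | @cons u u' v h p ih =>
    cases m with
    | zero => exact ⟨u, u', h, Walk.nil, p, rfl, rfl⟩
    | succ m =>
      obtain ⟨z, z', h', A, B, hP, hl⟩ := ih m (by simpa using hm)
      exact ⟨z, z', h', Walk.cons h A, B, by rw [hP]; rfl, by simp [hl]⟩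

lemma split_edge {V : Type*} {G : SimpleGraph V} {x y a b : V} (P : G.Walk x y)
    (he : s(a,b) ∈ P.edges) :
    (∃ (h : G.Adj a b) (A : G.Walk x a) (B : G.Walk b y), P = A.append (Walk.cons h B)) ∨
    (∃ (h : G.Adj b a) (A : G.Walk x b) (B : G.Walk a y), P = A.append (Walk.cons h B)) := by
  induction P with
  | nil => simp at he
  | @cons u u' v h p ih =>
    rw [Walk.edges_cons, List.mem_cons] at he
    rcases he with he | he
    · rcases Sym2.eq_iff.1 he with ⟨rfl, rfl⟩ | ⟨rfl, rfl⟩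
      · exact Or.inl ⟨h, Walk.nil, p, rfl⟩
      · exact Or.inr ⟨h, Walk.nil, p, rfl⟩
    · rcases ih he with ⟨h', A, B, hP⟩ | ⟨h', A, B, hP⟩
      · exact Or.inl ⟨h', Walk.cons h A, B, by rw [hP]; rfl⟩
      · exact Or.inr ⟨h', Walk.cons h A, B, by rw [hP]; rfl⟩

lemma private_edge {V : Type*} {G : SimpleGraph V} {t : ℕ} (ht : 1 ≤ t) (hG : NoShort G t) {x y : V}
    (P : G.Walk x y) (hP : P.IsPath) (hPl : P.length = t) :
    ∃ e ∈ P.edges, ∀ Q : G.Walk x y, Q.IsPath → Q.length = t → e ∈ Q.edges → P = Q := by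
  obtain ⟨z, z', h, A, B, rfl, hl⟩ := split_at P (t/2) (by omega)
  refine ⟨s(z,z'), by simp, fun Q hQ hQl he => ?_⟩
  have e1 : A.append (Walk.cons h B) = (A.concat h).append B := (Walk.concat_append _ _ _).symm
  rcases split_edge Q he with ⟨h', A', B', rfl⟩ | ⟨h', A', B', rfl⟩
  · have e2 : A'.append (Walk.cons h' B') = (A'.concat h').append B' := (Walk.concat_append _ _ _).symm
    have h1 := (split_unique hG A A' _ _ hP hQ hPl hQl).2.1 (by omega)
    rw [e1] at hP hPl
    rw [e2] at hQ hQl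
    have h2 := (split_unique hG _ _ _ _ hP hQ hPl hQl).2.2 (by rw [Walk.length_concat]; omega)
    rw [h1, h2]
  · have e2 : A'.append (Walk.cons h' B') = (A'.concat h').append B' := (Walk.concat_append _ _ _).symm
    have h1 := (split_unique hG A (A'.concat h') _ B' hP (e2 ▸ hQ) hPl (e2 ▸ hQl)).1
    rw [e1] at hP hPl
    have h2 := (split_unique hG (A.concat h) A' _ _ hP hQ hPl hQl).1
    rw [Walk.length_concat] at h1 h2
    omega

lemma paths_union {V : Type*} [DecidableEq V] {G : SimpleGraph V} {t : ℕ} (ht : 1 ≤ t)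
    (hG : NoShort G t) {x y : V} (S : Finset (G.Walk x y))
    (hS : ∀ P ∈ S, P.IsPath ∧ P.length = t) :
    ∃ (W : Finset V) (F : Finset (Sym2 V)), BStage G W F ∧ x ∈ W ∧ y ∈ W ∧
      W.card + S.card ≤ F.card + 2 ∧ W.card ≤ S.card * (t - 1) + 2 ∧
      ∀ e ∈ F, ∃ Q ∈ S, e ∈ Q.edges := by
  classical
  induction S using Finset.induction_on with
  | empty =>
    refine ⟨{x, y}, ∅, by simp [BStage], by simp, by simp, ?_, ?_, by simp⟩
    · simpa using Finset.card_le_two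
    · simpa using Finset.card_le_two
  | insert P S hPS ih =>
    obtain ⟨W, F, hB, hx, hy, h1, h2, h3⟩ := ih (fun Q hQ => hS Q (Finset.mem_insert_of_mem hQ))
    obtain ⟨hP, hPl⟩ := hS P (Finset.mem_insert_self _ _)
    obtain ⟨e, he, hpr⟩ := private_edge ht hG P hP hPl
    have heF : e ∉ F := by
      intro h
      obtain ⟨Q, hQ, heQ⟩ := h3 e h
      obtain ⟨hQ1, hQ2⟩ := hS Q (Finset.mem_insert_of_mem hQ)
      exact hPS (hpr Q hQ1 hQ2 heQ ▸ hQ)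
    obtain ⟨g1, g2, g3⟩ := ear W F hB P hx hy hP.isTrail ⟨e, he, heF⟩
    refine ⟨_, _, g1, Finset.mem_union_left _ hx, Finset.mem_union_left _ hy, ?_, ?_, ?_⟩
    · rw [Finset.card_insert_of_notMem hPS]; omega
    · rw [Finset.card_insert_of_notMem hPS, add_mul]; omega
    · intro f hf
      rw [Finset.mem_union, List.mem_toFinset] at hf
      rcases hf with hf | hf
      · obtain ⟨Q, hQ, h⟩ := h3 f hf
        exact ⟨Q, Finset.mem_insert_of_mem hQ, h⟩
      · exact ⟨P, Finset.mem_insert_self _ _, hf⟩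

/-- dense local configuration through `x` -/
def BGood {V : Type*} (G : SimpleGraph V) (x : V) (k s : ℕ) : Prop :=
  ∃ (W : Finset V) (F : Finset (Sym2 V)), BStage G W F ∧ x ∈ W ∧
    W.card + s ≤ F.card + 2 ∧ W.card + s ≤ k + 2

lemma BGood.extend {V : Type*} [Fintype V] [DecidableEq V] {G : SimpleGraph V} [DecidableRel G.Adj]
    {x : V} {k s : ℕ} (hs : 2 ≤ s)
    (hx : k ≤ G.degree x) (h : BGood G x k s) :
    ∃ (W : Finset V) (F : Finset (Sym2 V)), BStage G W F ∧ k ≤ F.card ∧ W.card + s ≤ k + 2 := by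
  obtain ⟨W, F, h1, h2, h3, h4⟩ := h
  obtain ⟨m, hm⟩ : ∃ m, W.card + s + m = k + 2 := ⟨k + 2 - (W.card + s), by omega⟩
  induction m generalizing W F with
  | zero => exact ⟨W, F, h1, by omega, h4⟩
  | succ m ih =>
    have : ∃ w ∈ G.neighborFinset x, w ∉ W := by
      by_contra hcon
      push Not at hcon
      have h5 : insert x (G.neighborFinset x) ⊆ W := by
        intro a ha
        rcases Finset.mem_insert.1 ha with rfl | ha
        · exact h2
        · exact hcon a ha
      have := Finset.card_le_card h5
      rw [Finset.card_insert_of_notMem (by simp), G.card_neighborFinset_eq_degree] at this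
      omega
    obtain ⟨w, hw, hwW⟩ := this
    rw [G.mem_neighborFinset] at hw
    have hF : s(x,w) ∉ F := fun h => hwW ((h1 _ h).2 w (by simp))
    refine ih (insert w W) (insert s(x,w) F) ?_ (Finset.mem_insert_of_mem h2) ?_ ?_ ?_
    · intro e he
      rcases Finset.mem_insert.1 he with rfl | he
      · refine ⟨hw, fun a ha => ?_⟩
        rcases Sym2.mem_iff.1 ha with rfl | rfl
        · exact Finset.mem_insert_of_mem h2
        · exact Finset.mem_insert_self _ _
      · exact ⟨(h1 e he).1, fun a ha => Finset.mem_insert_of_mem ((h1 e he).2 a ha)⟩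
    all_goals simp only [Finset.card_insert_of_notMem hwW, Finset.card_insert_of_notMem hF]; omega

/-- edge in a short cycle -/
def InShort {V : Type*} (G : SimpleGraph V) (t : ℕ) (e : Sym2 V) : Prop :=
  ∃ (z : V) (c : G.Walk z z), c.IsCycle ∧ c.length ≤ t ∧ e ∈ c.edges

open Classical in
lemma bad_bound {V : Type*} [Fintype V] {G : SimpleGraph V} (z : V) {k s t : ℕ} (hs : 2 ≤ s)
    (ht : 1 ≤ t) (hst : s * t ≤ k) (hno : ¬ BGood G z k s) :
    (Finset.univ.filter (fun w => InShort G t s(z,w))).card ≤ k := by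
  by_contra hcon
  push Not at hcon
  have hst' : s * (t - 1) + s ≤ k := by
    obtain ⟨t, rfl⟩ := Nat.exists_eq_add_of_le' ht
    simpa [mul_add] using hst
  have key : ∀ j, j + 1 ≤ s → ∃ (W : Finset V) (F : Finset (Sym2 V)), BStage G W F ∧ z ∈ W ∧
      W.card + j ≤ F.card + 1 ∧ W.card ≤ j * (t - 1) + 1 := by
    intro j
    induction j with
    | zero => exact fun _ => ⟨{z}, ∅, by simp [BStage], by simp, by simp, by simp⟩
    | succ j ih =>
      intro hj
      obtain ⟨W, F, h1, h2, h3, h4⟩ := ih (by omega)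
      have h5 : (j + 1) * (t - 1) ≤ s * (t - 1) := Nat.mul_le_mul_right _ (by omega)
      rw [add_mul] at h5
      obtain ⟨w, hw, hwW⟩ := Finset.exists_mem_notMem_of_card_lt_card (s := W) (lt_of_le_of_lt (by omega) hcon)
      obtain ⟨y, c, hc, hcl, hce⟩ := (Finset.mem_filter.1 hw).2
      have hz : z ∈ c.support := c.fst_mem_support_of_mem_edges hce
      have hce' : s(z,w) ∈ (c.rotate z hz).edges := (c.rotate_edges z hz).mem_iff.2 hce
      have hlen : (c.rotate z hz).length = c.length := by
        rw [← Walk.length_edges, ← Walk.length_edges]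
        exact (c.rotate_edges z hz).perm.length_eq
      obtain ⟨g1, g2, g3⟩ := ear W F h1 (c.rotate z hz) h2 h2 (hc.rotate hz).1.1
        ⟨_, hce', fun h => hwW ((h1 _ h).2 w (by simp))⟩
      refine ⟨_, _, g1, Finset.mem_union_left _ h2, by omega, ?_⟩
      rw [add_mul]
      omega
  obtain ⟨W, F, h1, h2, h3, h4⟩ := key (s - 1) (by omega)
  have h5 : (s - 1) * (t - 1) ≤ s * (t - 1) := Nat.mul_le_mul_right _ (by omega)
  exact hno ⟨W, F, h1, h2, by omega, by omega⟩

open Classical in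
lemma path_count {V : Type*} [Fintype V] {G : SimpleGraph V} (U : Finset V) (d : ℕ)
    (hU : ∀ a b, G.Adj a b → b ∈ U) (m : ℕ) (S : Finset V)
    (hd : ∀ u ∈ U, d + S.card + m ≤ G.degree u) (u : V) (hu : u ∈ U) (huS : u ∉ S) :
    ∃ A : Finset (Σ v, G.Walk u v), d ^ m ≤ A.card ∧
      ∀ a ∈ A, a.2.IsPath ∧ a.2.length = m ∧ ∀ b ∈ a.2.support, b ∉ S := by
  induction m generalizing u S with
  | zero => exact ⟨{⟨u, Walk.nil⟩}, by simp, by simpa using huS⟩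
  | succ m ih =>
    have hc : (insert u S).card = S.card + 1 := Finset.card_insert_of_notMem huS
    let N := G.neighborFinset u \ (insert u S)
    have hN : d ≤ N.card := by
      have h1 := Finset.le_card_sdiff (insert u S) (G.neighborFinset u)
      have h2 := hd u hu
      rw [G.card_neighborFinset_eq_degree] at h1
      simp only [N]
      omega
    have hNadj : ∀ w ∈ N, G.Adj u w := fun w hw => by
      simpa using (Finset.mem_sdiff.1 hw).1
    have hex : ∀ w : N, ∃ A : Finset (Σ v, G.Walk w.1 v), d ^ m ≤ A.card ∧
      ∀ a ∈ A, a.2.IsPath ∧ a.2.length = m ∧ ∀ b ∈ a.2.support, b ∉ insert u S := fun w =>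
      ih (insert u S) (fun a ha => by have := hd a ha; omega) w.1 (hU u w.1 (hNadj w.1 w.2))
        (Finset.mem_sdiff.1 w.2).2
    choose A hA1 hA2 using hex
    let f : (Σ w : N, Σ v, G.Walk w.1 v) → Σ v, G.Walk u v :=
      fun q => ⟨q.2.1, Walk.cons (hNadj q.1.1 q.1.2) q.2.2⟩
    have hf : Function.Injective f := by
      rintro ⟨⟨w, hw⟩, v, p⟩ ⟨⟨w', hw'⟩, v', p'⟩ h
      simp only [f, Sigma.mk.injEq] at h
      obtain ⟨rfl, h⟩ := h
      have h := eq_of_heq h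
      rw [Walk.cons.injEq] at h
      obtain ⟨rfl, h⟩ := h
      have h := eq_of_heq h
      subst h
      rfl
    refine ⟨(Finset.univ.sigma A).map ⟨f, hf⟩, ?_, ?_⟩
    · rw [Finset.card_map, Finset.card_sigma]
      calc d ^ (m+1) = d * d ^ m := by ring
        _ ≤ N.card * d ^ m := Nat.mul_le_mul_right _ hN
        _ = ∑ w : N, d ^ m := by simp
        _ ≤ _ := Finset.sum_le_sum (fun w _ => hA1 w)
    · intro a ha
      obtain ⟨⟨w, v, p⟩, hq, rfl⟩ := Finset.mem_map.1 ha
      have hq := hA2 w _ (Finset.mem_sigma.1 hq).2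
      obtain ⟨h1, h2, h3⟩ := hq
      simp only [Function.Embedding.coeFn_mk, f]
      refine ⟨?_, by simpa using h2, ?_⟩
      · rw [Walk.cons_isPath_iff]
        exact ⟨h1, fun h => h3 u h (Finset.mem_insert_self _ _)⟩
      · intro b hb
        rw [Walk.support_cons, List.mem_cons] at hb
        rcases hb with rfl | hb
        · exact huS
        · exact fun h => h3 b hb (Finset.mem_insert_of_mem h)

/-- restriction to a vertex set -/
def restr {V : Type*} (G : SimpleGraph V) (U : Finset V) : SimpleGraph V where
  Adj a b := G.Adj a b ∧ a ∈ U ∧ b ∈ U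
  symm := ⟨fun _ _ h => ⟨h.1.symm, h.2.2, h.2.1⟩⟩
  loopless := ⟨fun _ h => G.irrefl h.1⟩

open Classical in
lemma min_deg {V : Type*} [Fintype V] (G : SimpleGraph V) (δ : ℕ)
    (h : δ * Fintype.card V < G.edgeFinset.card) :
    ∃ U : Finset V, U.Nonempty ∧ ∀ u ∈ U, δ ≤ (restr G U).degree u := by
  have h0 : ∃ U : Finset V, δ * U.card < (restr G U).edgeFinset.card := by
    refine ⟨Finset.univ, ?_⟩
    have : restr G Finset.univ = G := by ext; simp [restr]
    have h2 : (restr G Finset.univ).edgeFinset = G.edgeFinset := by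
      ext e
      rw [SimpleGraph.mem_edgeFinset, SimpleGraph.mem_edgeFinset, this]
    rw [h2, Finset.card_univ]
    exact h
  obtain ⟨U, hU, hmin⟩ := exists_minimalFor_of_wellFoundedLT
    (fun U : Finset V => δ * U.card < (restr G U).edgeFinset.card) Finset.card h0
  refine ⟨U, ?_, ?_⟩
  · rw [Finset.nonempty_iff_ne_empty]
    rintro rfl
    have : restr G ∅ = ⊥ := by ext; simp [restr]
    simp [this] at hU
  · intro u hu
    by_contra hcon
    push Not at hcon
    have hc := Finset.card_erase_of_mem hu
    have hpos : 0 < U.card := Finset.card_pos.2 ⟨u, hu⟩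
    have h1 : (restr G U).edgeFinset.card ≤ (restr G (U.erase u)).edgeFinset.card + (restr G U).degree u := by
      rw [← SimpleGraph.card_incidenceFinset_eq_degree]
      refine (Finset.card_le_card ?_).trans (Finset.card_union_le _ _)
      intro e he
      rw [Finset.mem_union]
      by_cases hue : u ∈ e
      · right
        rw [SimpleGraph.mem_incidenceFinset]
        exact ⟨SimpleGraph.mem_edgeFinset.1 he, hue⟩
      · left
        rw [SimpleGraph.mem_edgeFinset] at he ⊢
        induction e with | _ a b =>
        simp only [Sym2.mem_iff, not_or] at hue
        obtain ⟨g1, g2, g3⟩ := he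
        exact ⟨g1, Finset.mem_erase.2 ⟨fun h => hue.1 h.symm, g2⟩, Finset.mem_erase.2 ⟨fun h => hue.2 h.symm, g3⟩⟩
    have hlt : δ * (U.erase u).card < (restr G (U.erase u)).edgeFinset.card := by
      rw [hc]
      obtain ⟨c, hc'⟩ := Nat.exists_eq_add_of_le' hpos
      rw [hc'] at hU ⊢
      simp only [mul_add] at hU
      simp
      simp at h1 hU
      omega
    have := hmin hlt (by omega)
    omega

open Classical in
lemma graph_main {V : Type*} [Fintype V] (G : SimpleGraph V) {k s t d : ℕ} (hs : 2 ≤ s) (ht : 1 ≤ t)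
    (hst : s * t ≤ k) (hd : (s - 1) * Fintype.card V < d ^ t)
    (h : (d + t + k) * Fintype.card V < G.edgeFinset.card) :
    ∃ (W : Finset V) (F : Finset (Sym2 V)), BStage G W F ∧ k ≤ F.card ∧ W.card + s ≤ k + 2 := by
  obtain ⟨U, ⟨x, hx⟩, hU⟩ := min_deg G _ h
  have hmono : ∀ H : SimpleGraph V, H ≤ G → ∀ W F, BStage H W F → BStage G W F := fun H hH W F hB e he =>
    ⟨SimpleGraph.edgeSet_mono hH (hB e he).1, (hB e he).2⟩
  have hle : restr G U ≤ G := fun a b hab => hab.1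
  by_cases hgood : ∃ z ∈ U, BGood (restr G U) z k s
  · obtain ⟨z, hz, hg⟩ := hgood
    obtain ⟨W, F, h1, h2, h3⟩ := hg.extend hs (by have := hU z hz; omega)
    exact ⟨W, F, hmono _ hle _ _ h1, h2, h3⟩
  push Not at hgood
  let H : SimpleGraph V := (restr G U).deleteEdges {e | InShort (restr G U) t e}
  have hHle : H ≤ restr G U := SimpleGraph.deleteEdges_le _
  have hH : NoShort H t := by
    intro z c hc
    by_contra hcon
    push Not at hcon
    have hne : c.edges ≠ [] := by
      intro h0
      have := hc.three_le_length
      rw [← Walk.length_edges, h0] at this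
      simp at this
    obtain ⟨e, he⟩ := List.exists_mem_of_ne_nil _ hne
    have h1 := c.edges_subset_edgeSet he
    rw [SimpleGraph.edgeSet_deleteEdges] at h1
    refine h1.2 ⟨z, c.mapLe hHle, hc.mapLe hHle, by simpa using hcon, by simpa using he⟩
  have hdeg : ∀ u ∈ U, d + t ≤ H.degree u := by
    intro u hu
    have h1 := hU u hu
    have h2 := bad_bound u hs ht hst (hgood u hu)
    have h3 : (restr G U).neighborFinset u ⊆ H.neighborFinset u ∪
      (Finset.univ.filter (fun w => InShort (restr G U) t s(u,w))) := by
      intro w hw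
      rw [SimpleGraph.mem_neighborFinset] at hw
      by_cases hb : InShort (restr G U) t s(u,w)
      · simp [hb]
      · simp [hb, H, SimpleGraph.deleteEdges_adj, hw]
    have h4 := (Finset.card_le_card h3).trans (Finset.card_union_le _ _)
    rw [SimpleGraph.card_neighborFinset_eq_degree, SimpleGraph.card_neighborFinset_eq_degree] at h4
    omega
  obtain ⟨A, hA1, hA2⟩ := path_count (G := H) U d (fun a b hab => (hHle hab).2.2) t ∅
    (fun u hu => by
      rw [Finset.card_empty, add_zero]
      convert hdeg u hu) x hx (by simp)
  obtain ⟨y, -, hy⟩ := Finset.exists_lt_card_fiber_of_mul_lt_card_of_maps_to (s := A)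
    (t := (Finset.univ : Finset V)) (f := fun a => a.1) (n := s - 1) (fun _ _ => Finset.mem_univ _)
    (by rw [Finset.card_univ, mul_comm]; omega)
  let S : Finset (H.Walk x y) := A.preimage (fun p => ⟨y, p⟩) (by
    intro a _ b _ hab
    simpa using hab)
  have hSc : s ≤ S.card := by
    have : (A.filter (fun a => a.1 = y)) ⊆ S.image (fun p => ⟨y, p⟩) := by
      rintro ⟨v, p⟩ hp
      rw [Finset.mem_filter] at hp
      obtain ⟨hp, rfl⟩ := hp
      exact Finset.mem_image.2 ⟨p, Finset.mem_preimage.2 hp, rfl⟩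
    have := (Finset.card_le_card this).trans Finset.card_image_le
    omega
  obtain ⟨S', hS', hS'c⟩ := Finset.exists_subset_card_eq hSc
  obtain ⟨W, F, h1, h2, -, h3, h4, -⟩ := paths_union ht hH S' (fun P hP => by
    have := hA2 ⟨y, P⟩ (Finset.mem_preimage.1 (hS' hP))
    exact ⟨this.1, this.2.1⟩)
  have hst' : s * (t - 1) + s ≤ k := by
    obtain ⟨t, rfl⟩ := Nat.exists_eq_add_of_le' ht
    simpa [mul_add] using hst
  rw [hS'c] at h3 h4
  refine absurd ⟨W, F, ?_, h2, h3, by omega⟩ (hgood x hx)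
  exact fun e he => ⟨SimpleGraph.edgeSet_mono hHle (h1 e he).1, (h1 e he).2⟩

/-- link graph -/
def linkG {n : ℕ} (E : Finset (Finset (Fin n))) (S : Finset (Fin n)) : SimpleGraph (Fin n) where
  Adj a b := a ≠ b ∧ a ∉ S ∧ b ∉ S ∧ insert a (insert b S) ∈ E
  symm := ⟨fun a b h => ⟨h.1.symm, h.2.2.1, h.2.1, by rw [Finset.insert_comm]; exact h.2.2.2⟩⟩
  loopless := ⟨fun _ h => h.1 rfl⟩

open Classical in
lemma link_bound {n q k s t d v : ℕ} (E : Finset (Finset (Fin n))) (S : Finset (Fin n))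
    (hE : ∀ e ∈ E, e.card = q + 2) (hv : v + s = k + (q + 2))
    (hfree : ∀ E' ⊆ E, E'.card = k → (v : ℤ) + 1 ≤ ((E'.biUnion id).card : ℤ))
    (hS : S.card = q) (hs : 2 ≤ s) (ht : 1 ≤ t)
    (hst : s * t ≤ k) (hd : (s - 1) * n < d ^ t) :
    (E.filter (fun e => S ⊆ e)).card ≤ (d + t + k) * n := by
  have hadj : ∀ e ∈ (linkG E S).edgeSet, S ∪ e.toFinset ∈ E ∧ Disjoint S e.toFinset := by
    intro e he
    induction e with | _ a b =>
    obtain ⟨h1, h2, h3, h4⟩ := he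
    constructor
    · convert h4 using 1
      ext x; simp; tauto
    · rw [Finset.disjoint_left]
      intro x hx hx'
      rw [Sym2.mem_toFinset, Sym2.mem_iff] at hx'
      rcases hx' with rfl | rfl <;> contradiction
  by_contra hcon
  push Not at hcon
  have h1 : (E.filter (fun e => S ⊆ e)) ⊆ (linkG E S).edgeFinset.image (fun e => S ∪ e.toFinset) := by
    intro e he
    rw [Finset.mem_filter] at he
    have h2 : (e \ S).card = 2 := by
      rw [Finset.card_sdiff_of_subset he.2, hE e he.1, hS]; omega
    obtain ⟨a, b, hab, h3⟩ := Finset.card_eq_two.1 h2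
    have ha : a ∈ e \ S := by rw [h3]; simp
    have hb : b ∈ e \ S := by rw [h3]; simp
    have he' : e = S ∪ {a, b} := by rw [← h3, Finset.union_sdiff_of_subset he.2]
    refine Finset.mem_image.2 ⟨s(a,b), ?_, ?_⟩
    · rw [SimpleGraph.mem_edgeFinset]
      refine ⟨hab, (Finset.mem_sdiff.1 ha).2, (Finset.mem_sdiff.1 hb).2, ?_⟩
      convert he.1 using 1
      rw [he']; ext x; simp; try tauto
    · rw [he']; ext x; simp; try tauto
  have h2 := (Finset.card_le_card h1).trans Finset.card_image_le
  obtain ⟨W, F, g1, g2, g3⟩ := graph_main (linkG E S) hs ht hst (by simpa using hd)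
    (by rw [Fintype.card_fin]; omega)
  obtain ⟨F', hF', hF'c⟩ := Finset.exists_subset_card_eq g2
  have hinj : Set.InjOn (fun e : Sym2 (Fin n) => S ∪ e.toFinset) F' := by
    intro e he e' he' hee
    have d1 := (hadj e (g1 e (hF' he)).1).2
    have d2 := (hadj e' (g1 e' (hF' he')).1).2
    have : e.toFinset = e'.toFinset := by
      rw [← Finset.union_sdiff_cancel_left d1, ← Finset.union_sdiff_cancel_left d2]
      simp only at hee
      rw [hee]
    apply Sym2.ext
    intro x
    rw [← Sym2.mem_toFinset, this, Sym2.mem_toFinset]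
  have h3 := hfree (F'.image (fun e => S ∪ e.toFinset)) (by
    intro e he
    obtain ⟨f, hf, rfl⟩ := Finset.mem_image.1 he
    exact (hadj f (g1 f (hF' hf)).1).1) (by rw [Finset.card_image_of_injOn hinj, hF'c])
  have h4 : (F'.image (fun e => S ∪ e.toFinset)).biUnion id ⊆ S ∪ W := by
    intro x hx
    obtain ⟨e, he, hxe⟩ := Finset.mem_biUnion.1 hx
    obtain ⟨f, hf, rfl⟩ := Finset.mem_image.1 he
    rcases Finset.mem_union.1 hxe with h | h
    · exact Finset.mem_union_left _ h
    · exact Finset.mem_union_right _ ((g1 f (hF' hf)).2 x (Sym2.mem_toFinset.1 h))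
  have h5 := (Finset.card_le_card h4).trans (Finset.card_union_le _ _)
  omega

open Classical in
lemma hyper_bound {n q k s t d v : ℕ} (E : Finset (Finset (Fin n)))
    (hE : ∀ e ∈ E, e.card = q + 2) (hv : v + s = k + (q + 2))
    (hfree : ∀ E' ⊆ E, E'.card = k → (v : ℤ) + 1 ≤ ((E'.biUnion id).card : ℤ))
    (hs : 2 ≤ s) (ht : 1 ≤ t)
    (hst : s * t ≤ k) (hd : (s - 1) * n < d ^ t) :
    E.card * (q + 2).choose q ≤ n.choose q * ((d + t + k) * n) := by
  have h := Finset.sum_card_bipartiteAbove_eq_sum_card_bipartiteBelow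
    (s := Finset.powersetCard q (Finset.univ : Finset (Fin n))) (t := E) (fun S e => S ⊆ e)
  have h1 : ∑ e ∈ E, (Finset.bipartiteBelow (fun S e => S ⊆ e)
      (Finset.powersetCard q (Finset.univ : Finset (Fin n))) e).card = E.card * (q + 2).choose q := by
    rw [← smul_eq_mul, ← Finset.sum_const]
    refine Finset.sum_congr rfl fun e he => ?_
    rw [← hE e he, ← Finset.card_powersetCard]
    congr 1
    ext S
    simp [Finset.bipartiteBelow, Finset.mem_powersetCard, and_comm]
  rw [← h1, ← h]
  calc _ ≤ ∑ S ∈ Finset.powersetCard q (Finset.univ : Finset (Fin n)), (d + t + k) * n := by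
        refine Finset.sum_le_sum fun S hS => ?_
        exact link_bound E S hE hv hfree (Finset.mem_powersetCard.1 hS).2 hs ht hst hd
    _ = _ := by simp

theorem statement8 (r v k : ℕ) (C : ℝ)
    (hr : 2 ≤ r) (hv1 : k + 2 * r ≤ 2 * v) (hv2 : v ≤ k + r - 2)
    (hC : C = ((k + r - v - 1 : ℕ) : ℝ) ^ ((1 : ℝ) / ((k / (k + r - v) : ℕ) : ℝ))) :
    ∃ D : ℝ, ∀ n : ℕ, k ≤ n →
      (fBES n r k (v : ℤ) : ℝ) ≤
        (2 * C / (r.factorial : ℝ)) *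
            (n : ℝ) ^ ((r : ℝ) - 1 + 1 / ((k / (k + r - v) : ℕ) : ℝ)) +
          D * (n : ℝ) ^ ((r : ℝ) - 1) := by
  obtain ⟨q, rfl⟩ := Nat.exists_eq_add_of_le' hr
  obtain ⟨s, hs⟩ : ∃ s, s = k + (q + 2) - v := ⟨_, rfl⟩
  rw [← hs] at hC ⊢
  obtain ⟨t, ht⟩ : ∃ t, t = k / s := ⟨_, rfl⟩
  rw [← ht] at hC ⊢
  have hs2 : 2 ≤ s := by omega
  have hv : v + s = k + (q + 2) := by omega
  have ht1 : 1 ≤ t := by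
    rw [ht]; exact (Nat.one_le_div_iff (by omega)).2 (by omega)
  have hst : s * t ≤ k := by rw [ht]; exact Nat.mul_div_le k s
  have hC0 : 0 ≤ C := by rw [hC]; positivity
  have ht0 : (t : ℝ) ≠ 0 := by positivity
  refine ⟨2 * (1 + t + k) / ((q + 2).factorial : ℝ) + 1, fun n hn => ?_⟩
  have hn1 : 1 ≤ n := by omega
  have hn0 : (0:ℝ) < n := by exact_mod_cast hn1
  set X : ℝ := (n : ℝ) ^ ((1:ℝ) / t) with hX
  have hX0 : 0 ≤ X := by positivity
  have e1 : (n : ℝ) ^ (((q + 2 : ℕ) : ℝ) - 1 + 1 / (t : ℝ)) = (n:ℝ) ^ (q + 1) * X := by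
    rw [Real.rpow_add hn0, ← Real.rpow_natCast]
    congr 2; push_cast; ring
  have e2 : (n : ℝ) ^ (((q + 2 : ℕ) : ℝ) - 1) = (n:ℝ) ^ (q + 1) := by
    rw [← Real.rpow_natCast]
    congr 1; push_cast; ring
  rw [e1, e2]
  obtain ⟨d, hd⟩ : ∃ d, d = ⌊C * X⌋₊ + 1 := ⟨_, rfl⟩
  have hd1 : C * X < d := by rw [hd]; push_cast; exact Nat.lt_floor_add_one _
  have hd2 : (d : ℝ) ≤ C * X + 1 := by
    rw [hd]; push_cast; gcongr; exact Nat.floor_le (by positivity)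
  have hdt : (s - 1) * n < d ^ t := by
    have h1 : (C * X) ^ t < (d : ℝ) ^ t := pow_lt_pow_left₀ hd1 (by positivity) (by omega)
    have h2 : (C * X) ^ t = ((s - 1 : ℕ) : ℝ) * n := by
      rw [mul_pow, hC, hX, ← Real.rpow_mul_natCast (by positivity), ← Real.rpow_mul_natCast (by positivity)]
      rw [one_div, inv_mul_cancel₀ ht0, Real.rpow_one, Real.rpow_one]
    rw [h2] at h1
    exact_mod_cast h1
  have key : ∀ E : Finset (Finset (Fin n)), (∀ e ∈ E, e.card = q + 2) →
      (∀ E' ⊆ E, E'.card = k → (v : ℤ) + 1 ≤ ((E'.biUnion id).card : ℤ)) →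
      (E.card : ℝ) ≤ 2 / ((q + 2).factorial : ℝ) * ((n:ℝ) ^ (q + 1) * (C * X + (1 + t + k))) := by
    intro E hE hfree
    have h1 := hyper_bound E hE hv hfree hs2 ht1 hst hdt
    have h2 : (E.card : ℝ) * ((q + 2).choose q : ℝ) ≤ (n.choose q : ℝ) * ((d + t + k) * n) := by
      exact_mod_cast h1
    have h3 : ((q + 2).choose q : ℝ) = ((q + 2).factorial : ℝ) / (q.factorial * 2) := by
      rw [Nat.cast_choose ℝ (by omega : q ≤ q + 2)]
      simp
    have h4 : (n.choose q : ℝ) ≤ (n:ℝ) ^ q / q.factorial := Nat.choose_le_pow_div q n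
    have h5 : (E.card : ℝ) * (((q + 2).factorial : ℝ) / (q.factorial * 2)) ≤
        (n:ℝ) ^ q / q.factorial * ((C * X + (1 + t + k)) * n) := by
      rw [← h3]
      refine h2.trans ?_
      have h6 : (d:ℝ) + t + k ≤ C * X + (1 + t + k) := by linarith
      gcongr
    have hq : (0:ℝ) < q.factorial := by positivity
    have hq2 : (0:ℝ) < (q+2).factorial := by positivity
    calc (E.card : ℝ) = (E.card : ℝ) * (((q + 2).factorial : ℝ) / (q.factorial * 2)) *
          (q.factorial * 2 / (q + 2).factorial) := by field_simp
      _ ≤ (n:ℝ) ^ q / q.factorial * ((C * X + (1 + t + k)) * n) *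
          (q.factorial * 2 / (q + 2).factorial) := by gcongr
      _ = _ := by field_simp; ring
  have hsup : ((sSup {m | ∃ E : Finset (Finset (Fin n)),
    (∀ e ∈ E, e.card = q + 2) ∧
    (∀ E' ⊆ E, E'.card = k → (v : ℤ) + 1 ≤ ((E'.biUnion id).card : ℤ)) ∧ E.card = m} : ℕ) : ℝ) ≤
      2 / ((q + 2).factorial : ℝ) * ((n:ℝ) ^ (q + 1) * (C * X + (1 + t + k))) := by
    refine (Nat.le_floor_iff (by positivity)).1 ?_
    refine csSup_le' ?_
    rintro m ⟨E, h1, h2, rfl⟩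
    exact Nat.le_floor (key E h1 h2)
  have hpow : (1:ℝ) ≤ (n:ℝ) ^ (q + 1) := one_le_pow₀ (by exact_mod_cast hn1)
  unfold fBES
  push_cast
  have : 2 / ((q + 2).factorial : ℝ) * ((n:ℝ) ^ (q + 1) * (C * X + (1 + t + k))) + (n:ℝ) ^ (q + 1) =
    2 * C / ((q + 2).factorial : ℝ) * ((n:ℝ) ^ (q + 1) * X) +
      (2 * (1 + t + k) / ((q + 2).factorial : ℝ) + 1) * (n:ℝ) ^ (q + 1) := by ring
  linarith
end

section
/- Let q ≥ −1 and k ≥ 2q+6 be integers, let h = ⌊k/(q+3)⌋. Let F be a finite simple graph with at least one vertex whose minimum degree δ satisfies δ ≥ q+3, and suppose F is H^{(2)}(k,q)-free. Then the number of vertices of F satisfies |V(F)| > (δ−q−2)^h/(q+2). -/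
/-- An edge set `E` (of an `r`-uniform hypergraph) is `H^{(r)}(k,q)`-free if for every
integer `i` with `q + r + 1 ≤ i ≤ k`, every `i` pairwise distinct edges together cover
at least `i - q` vertices.  For `r = 2` the range of `i` is `q + 3 ≤ i ≤ k`. -/
def HFree {V : Type*} [DecidableEq V] (r k : ℕ) (q : ℤ) (E : Finset (Finset V)) : Prop :=
  ∀ i : ℕ, q + r + 1 ≤ (i : ℤ) → i ≤ k → ∀ E' ⊆ E, E'.card = i →
    (i : ℤ) - q ≤ ((E'.biUnion id).card : ℤ)

section helpers

variable {V : Type*} [DecidableEq V]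

/-- `x` is reachable from `r` by a walk of length at most `n` all of whose vertices satisfy `P`. -/
def Rch (E : Finset (Finset V)) (r : V) (P : V → Prop) : ℕ → V → Prop
  | 0, x => x = r ∧ P x
  | n + 1, x => Rch E r P n x ∨ (P x ∧ ∃ y, Rch E r P n y ∧ ({y, x} : Finset V) ∈ E)

def cov (r : V) (S : Finset (Finset V)) : Finset V := insert r (S.biUnion id)

theorem Rch.mono {E : Finset (Finset V)} {r : V} {P : V → Prop} {m n : ℕ} (h : m ≤ n) {x : V}
    (hx : Rch E r P m x) : Rch E r P n x := by
  induction h with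
  | refl => exact hx
  | step _ ih => exact Or.inl ih

theorem Rch.avoid {E : Finset (Finset V)} {r u : V} : ∀ (n : ℕ) (x : V),
    Rch E r (fun _ => True) n x → (∀ m < n, ¬ Rch E r (fun _ => True) m u) → x ≠ u →
    Rch E r (fun z => z ≠ u) n x := by
  intro n
  induction n with
  | zero => intro x hx _ hne; exact ⟨hx.1, hne⟩
  | succ n ih =>
    intro x hx hu hne
    rcases hx with hx | ⟨_, y, hy, hE⟩
    · exact Or.inl (ih x hx (fun m hm => hu m (by omega)) hne)
    · refine Or.inr ⟨hne, y, ih y hy (fun m hm => hu m (by omega)) ?_, hE⟩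
      rintro rfl
      exact hu n (by omega) hy

theorem cov_insert (r : V) (S : Finset (Finset V)) (e : Finset V) :
    cov r (insert e S) = e ∪ cov r S := by
  ext z; simp [cov]

theorem path_add {E : Finset (Finset V)} {r u : V} : ∀ (n : ℕ) (x : V),
    Rch E r (fun z => z ≠ u) n x → ∀ S ⊆ E, u ∉ cov r S →
    ∃ S' ⊆ E, S'.card ≤ S.card + n ∧ cov r S ⊆ cov r S' ∧ x ∈ cov r S' ∧ u ∉ cov r S' ∧
      (cov r S').card + S.card ≤ (cov r S).card + S'.card := by
  intro n
  induction n with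
  | zero =>
    intro x hx S hS hu
    refine ⟨S, hS, by simp, subset_rfl, ?_, hu, le_rfl⟩
    rw [hx.1]; simp [cov]
  | succ n ih =>
    intro x hx S hS hu
    rcases hx with hx | ⟨hne, y, hy, hE⟩
    · obtain ⟨S', h1, h2, h3⟩ := ih x hx S hS hu
      exact ⟨S', h1, by omega, h3⟩
    · obtain ⟨S', h1, h2, h3, h4, h5, h6⟩ := ih y hy S hS hu
      by_cases hxS : x ∈ cov r S'
      · exact ⟨S', h1, by omega, h3, hxS, h5, h6⟩
      · have hnew : ({y, x} : Finset V) ∉ S' := by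
          intro hc
          apply hxS
          simp only [cov, Finset.mem_insert, Finset.mem_biUnion]
          exact Or.inr ⟨_, hc, by simp⟩
        have hcov : cov r (insert {y, x} S') = insert x (cov r S') := by
          rw [cov_insert]
          ext z
          simp only [Finset.mem_union, Finset.mem_insert, Finset.mem_singleton]
          constructor
          · rintro ((rfl | rfl) | h)
            · exact Or.inr h4
            · exact Or.inl rfl
            · exact Or.inr h
          · rintro (rfl | h) <;> simp [*]
        refine ⟨insert {y, x} S', ?_, ?_, ?_, ?_, ?_, ?_⟩
        · exact Finset.insert_subset hE h1
        · rw [Finset.card_insert_of_notMem hnew]; omega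
        · rw [hcov]; exact h3.trans (Finset.subset_insert _ _)
        · rw [hcov]; simp
        · rw [hcov]; simp only [Finset.mem_insert, not_or]; exact ⟨fun h => hne h.symm, h5⟩
        · rw [hcov, Finset.card_insert_of_notMem hnew, Finset.card_insert_of_notMem hxS]; omega

theorem paths_add {E : Finset (Finset V)} {r u : V} (hur : u ≠ r) (m : ℕ) (N : Finset V) :
    (∀ x ∈ N, Rch E r (fun z => z ≠ u) m x) →
    ∃ S ⊆ E, S.card ≤ N.card * m ∧ N ⊆ cov r S ∧ u ∉ cov r S ∧
      (cov r S).card ≤ 1 + S.card := by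
  induction N using Finset.induction_on with
  | empty => intro _; exact ⟨∅, by simp, by simp, by simp, by simpa [cov] using hur, by simp [cov]⟩
  | insert a N ha ih =>
    intro hN
    obtain ⟨S, h1, h2, h3, h4, h5⟩ := ih (fun x hx => hN x (by simp [hx]))
    obtain ⟨S', g1, g2, g3, g4, g5, g6⟩ := path_add m a (hN a (by simp)) S h1 h4
    refine ⟨S', g1, ?_, Finset.insert_subset g4 (h3.trans g3), g5, by omega⟩
    rw [Finset.card_insert_of_notMem ha, add_mul]; omega

theorem bad_le {E : Finset (Finset V)} {r u : V} {k p m : ℕ} {q : ℤ} (hp : (p : ℤ) = q + 2)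
    (hp1 : 1 ≤ p) (hk : (p + 1) * (m + 1) ≤ k) (hfree : HFree 2 k q E)
    (hunif : ∀ e ∈ E, e.card = 2) (N : Finset V)
    (hN : ∀ x ∈ N, ({u, x} : Finset V) ∈ E ∧ Rch E r (fun z => z ≠ u) m x) : N.card ≤ p := by
  by_contra hcon
  obtain ⟨M, hMN, hMc⟩ := Finset.exists_subset_card_eq (show p + 1 ≤ N.card by omega)
  have hur : u ≠ r := by
    rintro rfl
    have : M.Nonempty := by rw [← Finset.card_pos]; omega
    obtain ⟨x, hx⟩ := this
    have h := (hN x (hMN hx)).2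
    clear hx
    have key : ∀ n x, ¬ Rch E u (fun z => z ≠ u) n x := by
      intro n
      induction n with
      | zero => rintro x ⟨h1, h2⟩; exact h2 h1
      | succ n ih =>
        rintro x (h | ⟨_, y, hy, _⟩)
        · exact ih x h
        · exact ih y hy
    exact key _ _ h
  obtain ⟨S, h1, h2, h3, h4, h5⟩ := paths_add hur m M (fun x hx => (hN x (hMN hx)).2)
  have hMu : u ∉ M := fun h => h4 (h3 h)
  set A := M.image (fun x => ({u, x} : Finset V)) with hA
  have hAc : A.card = p + 1 := by
    rw [hA, Finset.card_image_of_injOn, hMc]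
    intro x hx y hy hxy
    have hxy : ({u, x} : Finset V) = {u, y} := hxy
    have : x ∈ ({u, y} : Finset V) := by rw [← hxy]; simp
    simp only [Finset.mem_insert, Finset.mem_singleton] at this
    rcases this with rfl | h
    · exact absurd hx hMu
    · exact h
  have hdis : Disjoint S A := by
    rw [Finset.disjoint_left]
    intro e heS heA
    obtain ⟨x, _, rfl⟩ := Finset.mem_image.1 heA
    apply h4
    simp only [cov, Finset.mem_insert, Finset.mem_biUnion]
    exact Or.inr ⟨_, heS, by simp⟩
  have hc : (S ∪ A).card = S.card + (p + 1) := by rw [Finset.card_union_of_disjoint hdis, hAc]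
  have hsub : (S ∪ A).biUnion id ⊆ insert u (cov r S) := by
    intro z hz
    obtain ⟨e, he, hze⟩ := Finset.mem_biUnion.1 hz
    rcases Finset.mem_union.1 he with he | he
    · simp only [cov, Finset.mem_insert, Finset.mem_biUnion]
      exact Or.inr (Or.inr ⟨e, he, hze⟩)
    · obtain ⟨x, hx, rfl⟩ := Finset.mem_image.1 he
      simp only [id, Finset.mem_insert, Finset.mem_singleton] at hze
      rcases hze with rfl | rfl
      · simp
      · exact Finset.mem_insert_of_mem (h3 hx)
  have hle := Finset.card_le_card hsub
  rw [Finset.card_insert_of_notMem h4] at hle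
  have hAE : A ⊆ E := by
    intro e he
    obtain ⟨x, hx, rfl⟩ := Finset.mem_image.1 he
    exact (hN x (hMN hx)).1
  have := hfree (S ∪ A).card (by push_cast; rw [hc]; push_cast; omega)
    (by rw [hc]; rw [hMc] at h2; nlinarith) (S ∪ A) (Finset.union_subset h1 hAE) rfl
  rw [hc] at this
  push_cast at this
  omega

theorem main_nat [Fintype V] [Nonempty V] {E : Finset (Finset V)} {k p m d δ : ℕ} {q : ℤ}
    (hp : (p : ℤ) = q + 2)
    (hp1 : 1 ≤ p) (hk : (p + 1) * (m + 1) ≤ k) (hfree : HFree 2 k q E)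
    (hunif : ∀ e ∈ E, e.card = 2) (hd : d + p = δ)
    (hδ_le : ∀ v : V, δ ≤ (E.filter (fun e => v ∈ e)).card) :
    d ^ (m + 1) < p * Fintype.card V := by
  classical
  obtain ⟨r⟩ := ‹Nonempty V›
  have hne : ∀ x y : V, ({x, y} : Finset V) ∈ E → x ≠ y := by
    rintro x y h rfl
    have := hunif _ h
    simp at this
  let D : ℕ → V → Prop := Rch E r (fun _ => True)
  let C : V → Finset V := fun u => Finset.univ.filter
    (fun x => ({u, x} : Finset V) ∈ E ∧ ¬ Rch E r (fun z => z ≠ u) m x)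
  have hC : ∀ u, d ≤ (C u).card := by
    intro u
    let Nb : Finset V := Finset.univ.filter (fun x => ({u, x} : Finset V) ∈ E)
    let B : Finset V := Finset.univ.filter
      (fun x => ({u, x} : Finset V) ∈ E ∧ Rch E r (fun z => z ≠ u) m x)
    have hB : B.card ≤ p := bad_le hp hp1 hk hfree hunif B (u := u) (r := r) (by simp [B])
    have h1 : Nb ⊆ C u ∪ B := by
      intro x hx
      simp only [Nb, C, B, Finset.mem_union, Finset.mem_filter, Finset.mem_univ, true_and] at hx ⊢
      tauto
    have h2 : E.filter (fun e => u ∈ e) ⊆ Nb.image (fun x => ({u, x} : Finset V)) := by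
      intro e he
      obtain ⟨heE, hue⟩ := Finset.mem_filter.1 he
      obtain ⟨a, b, hab, rfl⟩ := Finset.card_eq_two.1 (hunif e heE)
      simp only [Finset.mem_insert, Finset.mem_singleton] at hue
      rcases hue with rfl | rfl
      · exact Finset.mem_image.2 ⟨b, by simpa [Nb] using heE, rfl⟩
      · exact Finset.mem_image.2 ⟨a, by simpa [Nb, Finset.pair_comm] using heE,
          Finset.pair_comm _ _⟩
    have h3 := (Finset.card_le_card h2).trans Finset.card_image_le
    have h4 := (Finset.card_le_card h1).trans (Finset.card_union_le _ _)
    have := hδ_le u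
    omega
  let Lv : ℕ → V → Prop := fun j u => D j u ∧ ∀ i < j, ¬ D i u
  have hCL : ∀ j u x, j ≤ m → Lv j u → x ∈ C u → Lv (j + 1) x := by
    intro j u x hj hu hx
    simp only [C, Finset.mem_filter, Finset.mem_univ, true_and] at hx
    refine ⟨Or.inr ⟨trivial, u, hu.1, hx.1⟩, fun i hi hD => hx.2 ?_⟩
    exact (Rch.avoid j x (hD.mono (by omega)) hu.2 (hne _ _ hx.1).symm).mono hj
  let T : ℕ → Finset V := fun n => Nat.rec {r} (fun _ t => t.biUnion C) n
  have hTs : ∀ j, T (j + 1) = (T j).biUnion C := fun j => rfl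
  have hTL : ∀ j, j ≤ m + 1 → ∀ u ∈ T j, Lv j u := by
    intro j
    induction j with
    | zero =>
      intro _ u hu
      have : u = r := by simpa [T] using hu
      exact ⟨⟨this, trivial⟩, by simp⟩
    | succ j ih =>
      intro hj u hu
      rw [hTs] at hu
      obtain ⟨w, hw, huw⟩ := Finset.mem_biUnion.1 hu
      exact hCL j w u (by omega) (ih (by omega) w hw) huw
  have hTc : ∀ j, j ≤ m → d ^ j ≤ (T j).card := by
    intro j
    induction j with
    | zero => intro _; simp [T]
    | succ j ih =>
      intro hj
      have hih := ih (by omega)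
      rw [hTs, Finset.card_biUnion]
      · calc d ^ (j + 1) = d ^ j * d := pow_succ _ _
          _ ≤ (T j).card * d := Nat.mul_le_mul_right _ hih
          _ = ∑ u ∈ T j, d := by simp
          _ ≤ _ := Finset.sum_le_sum (fun u _ => hC u)
      · intro u hu v hv huv
        change Disjoint (C u) (C v)
        rw [Finset.disjoint_left]
        intro x hxu hxv
        simp only [C, Finset.mem_filter, Finset.mem_univ, true_and] at hxu hxv
        apply hxu.2
        have hLu := hTL j (by omega) u hu
        have hLv := hTL j (by omega) v hv
        refine Rch.mono hj ?_
        exact Or.inr ⟨(hne _ _ hxu.1).symm, v, Rch.avoid j v hLv.1 hLu.2 huv.symm, hxv.1⟩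
  have hdc : (T m).card * d ≤ (T (m + 1)).card * p := by
    apply Finset.card_mul_le_card_mul (fun u x => x ∈ C u)
    · intro u hu
      refine (hC u).trans (Finset.card_le_card ?_)
      intro x hx
      exact Finset.mem_filter.2 ⟨by rw [hTs]; exact Finset.mem_biUnion.2 ⟨u, hu, hx⟩, hx⟩
    · intro w hw
      refine bad_le hp hp1 hk hfree hunif _ (u := w) (r := r) ?_
      intro u hu
      obtain ⟨huT, huw⟩ := Finset.mem_filter.1 hu
      simp only [C, Finset.mem_filter, Finset.mem_univ, true_and] at huw
      refine ⟨by rw [Finset.pair_comm]; exact huw.1, ?_⟩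
      exact Rch.avoid m u (hTL m (by omega) u huT).1
        (fun i hi => (hTL (m + 1) le_rfl w hw).2 i (by omega)) (hne _ _ huw.1)
  have hlt : (T (m + 1)).card < Fintype.card V := by
    rw [← Finset.card_univ]
    apply Finset.card_lt_card
    rw [Finset.ssubset_univ_iff]
    intro h
    have hr : r ∈ T (m + 1) := by rw [h]; simp
    exact (hTL (m + 1) le_rfl r hr).2 0 (by omega) ⟨rfl, trivial⟩
  calc d ^ (m + 1) = d ^ m * d := pow_succ _ _
    _ ≤ (T m).card * d := Nat.mul_le_mul_right _ (hTc m le_rfl)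
    _ ≤ (T (m + 1)).card * p := hdc
    _ < p * Fintype.card V := by rw [mul_comm]; exact Nat.mul_lt_mul_of_pos_left hlt hp1

end helpers

/-- For `q ≥ -1`, `k ≥ 2q+6` and `h = ⌊k/(q+3)⌋`: if `F` is a finite simple graph with
at least one vertex, whose minimum degree `δ` satisfies `δ ≥ q+3`, and `F` is
`H^{(2)}(k,q)`-free, then `|V(F)| > (δ-q-2)^h/(q+2)`. -/
theorem statement9 (k : ℕ) (q h : ℤ) (δ : ℕ)
    {V : Type*} [Fintype V] [DecidableEq V] [Nonempty V]
    (hq : -1 ≤ q) (hk : 2 * q + 6 ≤ (k : ℤ))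
    (hh : h = (k : ℤ) / (q + 3))
    (E : Finset (Finset V)) (hunif : ∀ e ∈ E, e.card = 2)
    (hδ_le : ∀ v : V, δ ≤ (E.filter (fun e => v ∈ e)).card)
    (hδ_attained : ∃ v : V, (E.filter (fun e => v ∈ e)).card = δ)
    (hδ_big : q + 3 ≤ (δ : ℤ))
    (hfree : HFree 2 k q E) :
    ((δ : ℝ) - (q : ℝ) - 2) ^ h / ((q : ℝ) + 2) < (Fintype.card V : ℝ) := by
  obtain ⟨p, hp⟩ := Int.eq_ofNat_of_zero_le (show 0 ≤ q + 2 by omega)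
  have hp1 : 1 ≤ p := by omega
  have h2 : 2 ≤ h := by
    rw [hh]
    exact (Int.le_ediv_iff_mul_le (by omega)).2 (by omega)
  obtain ⟨m, hm⟩ := Int.eq_ofNat_of_zero_le (show 0 ≤ h - 1 by omega)
  have hhm : h = ((m + 1 : ℕ) : ℤ) := by push_cast; omega
  have hkk : (p + 1) * (m + 1) ≤ k := by
    have h3 := Int.ediv_mul_le (k : ℤ) (show q + 3 ≠ 0 by omega)
    rw [← hh, hhm, show q + 3 = ((p + 1 : ℕ) : ℤ) by push_cast; omega] at h3
    rw [mul_comm]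
    exact_mod_cast h3
  have hmain := main_nat (d := δ - p) hp.symm hp1 hkk hfree hunif (by omega) hδ_le
  have hpR : (q : ℝ) + 2 = (p : ℝ) := by exact_mod_cast hp
  have hdR : (δ : ℝ) - q - 2 = ((δ - p : ℕ) : ℝ) := by
    rw [Nat.cast_sub (by omega)]; linarith
  have hp0 : (0 : ℝ) < p := by exact_mod_cast hp1
  rw [hdR, hpR, hhm, zpow_natCast, div_lt_iff₀ hp0, mul_comm]
  exact_mod_cast hmain
end

section
/- Let q ≥ −1, k ≥ 2q+6 and n ≥ k be integers, let h = ⌊k/(q+3)⌋ and C = (q+2)^{1/h} (a real number). Let E be a multiset of 2-element subsets (edges, possibly repeated) of an n-element vertex set such that for every integer i with q+3 ≤ i ≤ k, every sub-multiset of E consisting of i edges (counted with multiplicity) covers at least i−q vertices in total. Then the number of edges of E counted with multiplicity is less than C·n^{1+1/h} + (q+2)·n. -/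
structure Ctx (V ι : Type) [Fintype V] [DecidableEq V] [Fintype ι] [DecidableEq ι] where
  tl : ι → V
  hd : ι → V
  lv : V → ℕ
  W : Finset V
  S : Finset V
  c : ℕ
  Q : ℕ
  h : ℕ
  D : ℝ
  hle : ∀ e, lv (tl e) ≤ lv (hd e)
  hlip : ∀ e, lv (hd e) ≤ lv (tl e) + 1
  hne : ∀ e, tl e ≠ hd e
  hW : ∀ v, lv v = 0 ↔ v ∈ W
  hpar : ∀ v, 1 ≤ lv v → lv v ≤ h → ∃ e, hd e = v ∧ lv (tl e) + 1 = lv v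
  tlS : ∀ e, tl e ∈ S
  hdS : ∀ e, hd e ∈ S
  ext2 : ∀ (X : Finset V) (U : Finset ι), (∀ x ∈ X, 1 ≤ lv x) → X ⊆ S → (∀ e ∈ U, 1 ≤ lv (hd e)) →
    (∀ e ∈ U, tl e ∈ W ∪ X ∧ hd e ∈ W ∪ X) → X.card + 2 ≤ U.card → U.card ≤ 2 * h → False
  extQ : ∀ (X : Finset V) (U : Finset ι), (∀ x ∈ X, 1 ≤ lv x) → X ⊆ S → (∀ e ∈ U, 1 ≤ lv (hd e)) →
    (∀ e ∈ U, tl e ∈ W ∪ X ∧ hd e ∈ W ∪ X) → X.card + (Q - c) ≤ U.card →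
    U.card ≤ (Q - c + 1) * h → False
  inside : (Finset.univ.filter (fun e => lv (hd e) = 0)).card < W.card + c
  deg : ∀ A ⊆ S, A.Nonempty →
    (D + Q) * A.card ≤ (Finset.univ.filter (fun e => tl e ∈ A ∨ hd e ∈ A)).card
  hc : c < Q
  Wne : W.Nonempty
  WS : W ⊆ S
  hD : 0 ≤ D
  hh : 1 ≤ h

namespace Ctx
variable {V ι : Type} [Fintype V] [DecidableEq V] [Fintype ι] [DecidableEq ι] (K : Ctx V ι)

def IsPath (m : ℕ) (g : ℕ → ι) : Prop :=
  (∀ i < m, K.lv (K.tl (g i)) = i ∧ K.lv (K.hd (g i)) = i + 1) ∧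
  (∀ i, i + 1 < m → K.hd (g i) = K.tl (g (i + 1)))

def edges (g : ℕ → ι) : Finset ι := (Finset.range K.h).image g

theorem mem_edges {g : ℕ → ι} {e : ι} : e ∈ K.edges g ↔ ∃ i < K.h, g i = e := by
  simp [edges]

theorem pos {g g' : ℕ → ι} (hg : K.IsPath K.h g) (hg' : K.IsPath K.h g') {i j : ℕ}
    (hi : i < K.h) (hj : j < K.h) (he : g i = g' j) : i = j := by
  have h1 := (hg.1 i hi).2
  have h2 := (hg'.1 j hj).2
  rw [he] at h1
  omega

theorem card_edges (g : ℕ → ι) : (K.edges g).card ≤ K.h := by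
  unfold edges
  exact Finset.card_image_le.trans (by simp)

theorem edge_ends {g : ℕ → ι} (hg : K.IsPath K.h g) {X : Finset V}
    (hX : ∀ e ∈ K.edges g, K.hd e ∈ X) {e : ι} (he : e ∈ K.edges g) :
    K.tl e ∈ K.W ∪ X ∧ K.hd e ∈ K.W ∪ X := by
  refine ⟨?_, Finset.mem_union_right _ (hX e he)⟩
  obtain ⟨i, hi, rfl⟩ := K.mem_edges.1 he
  rcases i with _ | i
  · exact Finset.mem_union_left _ ((K.hW _).1 (hg.1 0 hi).1)
  · rw [← hg.2 i hi]
    exact Finset.mem_union_right _ (hX _ (K.mem_edges.2 ⟨i, by omega, rfl⟩))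

theorem edge_lv {g : ℕ → ι} (hg : K.IsPath K.h g) {e : ι} (he : e ∈ K.edges g) :
    1 ≤ K.lv (K.hd e) := by
  obtain ⟨i, hi, rfl⟩ := K.mem_edges.1 he
  rw [(hg.1 i hi).2]; omega

/-- no merge followed by a split -/
theorem two {g g' : ℕ → ι} (hg : K.IsPath K.h g) (hg' : K.IsPath K.h g') {a b : ℕ}
    (hab : a < b) (hb : b < K.h) (ha1 : g a ≠ g' a) (ha2 : K.hd (g a) = K.hd (g' a))
    (hb1 : g b ≠ g' b) (hb2 : K.hd (g b) = K.hd (g' b)) : False := by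
  set U := K.edges g ∪ K.edges g' with hU
  have hsub : U.image K.hd ⊆ ((U.erase (g' a)).erase (g' b)).image K.hd := by
    have mg : ∀ i < K.h, g i ∈ U := fun i hi =>
      Finset.mem_union_left _ (K.mem_edges.2 ⟨i, hi, rfl⟩)
    have key : ∀ i < K.h, g i ∈ (U.erase (g' a)).erase (g' b) := by
      intro i hi
      rw [Finset.mem_erase, Finset.mem_erase]
      refine ⟨fun h => ?_, fun h => ?_, mg i hi⟩
      · have := K.pos hg hg' hi hb h; subst this; exact hb1 h
      · have := K.pos hg hg' hi (hab.trans hb) h; subst this; exact ha1 h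
    intro x hx
    obtain ⟨e, he, rfl⟩ := Finset.mem_image.1 hx
    by_cases h1 : e = g' a
    · rw [h1, ← ha2]; exact Finset.mem_image_of_mem _ (key a (hab.trans hb))
    by_cases h2 : e = g' b
    · rw [h2, ← hb2]; exact Finset.mem_image_of_mem _ (key b hb)
    exact Finset.mem_image_of_mem _ (by simp [h1, h2, he])
  have m1 : g' a ∈ U := Finset.mem_union_right _ (K.mem_edges.2 ⟨a, hab.trans hb, rfl⟩)
  have m2 : g' b ∈ U.erase (g' a) := by
    refine Finset.mem_erase.2 ⟨fun h => ?_, Finset.mem_union_right _ (K.mem_edges.2 ⟨b, hb, rfl⟩)⟩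
    have := K.pos hg' hg' hb (hab.trans hb) h
    omega
  have c1 := Finset.card_erase_add_one m1
  have c2 := Finset.card_erase_add_one m2
  have c3 := (Finset.card_le_card hsub).trans Finset.card_image_le
  have c4 : U.card ≤ 2 * K.h := by
    have := Finset.card_union_le (K.edges g) (K.edges g')
    have := K.card_edges g
    have := K.card_edges g'
    rw [hU]
    omega
  have hlv : ∀ e ∈ U, 1 ≤ K.lv (K.hd e) := by
    intro e he
    rcases Finset.mem_union.1 he with he | he
    · exact K.edge_lv hg he
    · exact K.edge_lv hg' he
  refine K.ext2 (U.image K.hd) U ?_ ?_ hlv ?_ (by omega) c4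
  · intro x hx
    obtain ⟨e, he, rfl⟩ := Finset.mem_image.1 hx
    exact hlv e he
  · intro x hx
    obtain ⟨e, he, rfl⟩ := Finset.mem_image.1 hx
    exact K.hdS e
  · intro e he
    rcases Finset.mem_union.1 he with he | he
    · exact K.edge_ends hg (fun e he => Finset.mem_image_of_mem _ (Finset.mem_union_left _ he)) he
    · exact K.edge_ends hg' (fun e he => Finset.mem_image_of_mem _ (Finset.mem_union_right _ he)) he

/-- paths with the same end that differ at some point have a last difference, where heads agree -/
theorem last_diff {g g' : ℕ → ι} (hg : K.IsPath K.h g) (hg' : K.IsPath K.h g')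
    (hv : K.hd (g (K.h - 1)) = K.hd (g' (K.h - 1))) {a : ℕ} (ha : a < K.h) (hd : g a ≠ g' a) :
    ∃ b, a ≤ b ∧ b < K.h ∧ g b ≠ g' b ∧ K.hd (g b) = K.hd (g' b) := by
  obtain ⟨n, hn⟩ : ∃ n, n = K.h - a := ⟨_, rfl⟩
  induction n generalizing a with
  | zero => omega
  | succ n ih =>
    by_cases hl : a + 1 < K.h
    · by_cases he : g (a + 1) = g' (a + 1)
      · exact ⟨a, le_rfl, ha, hd, by rw [hg.2 a hl, hg'.2 a hl, he]⟩
      · obtain ⟨b, h1, h2⟩ := ih hl he (by omega)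
        exact ⟨b, by omega, h2⟩
    · have : a = K.h - 1 := by omega
      subst this
      exact ⟨_, le_rfl, ha, hd, hv⟩

theorem excess (v : V) (T : Finset (ℕ → ι)) (hT : T.Nonempty)
    (hp : ∀ g ∈ T, K.IsPath K.h g ∧ K.hd (g (K.h - 1)) = v)
    (hdist : ∀ g ∈ T, ∀ g' ∈ T, (∀ i < K.h, g i = g' i) → g = g') :
    ((T.biUnion K.edges).image K.hd).card + T.card ≤ (T.biUnion K.edges).card + 1 := by
  induction hT using Finset.Nonempty.cons_induction with
  | singleton g =>
    simp only [Finset.singleton_biUnion, Finset.card_singleton]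
    have := Finset.card_image_le (s := K.edges g) (f := K.hd)
    omega
  | cons P T hPT hT ih =>
    have hpT : ∀ g ∈ T, K.IsPath K.h g ∧ K.hd (g (K.h - 1)) = v :=
      fun g hg => hp g (Finset.mem_cons_of_mem hg)
    have ih' := ih hpT
      (fun g hg g' hg' => hdist g (Finset.mem_cons_of_mem hg) g' (Finset.mem_cons_of_mem hg'))
    obtain ⟨hP, hPv⟩ := hp P (Finset.mem_cons_self _ _)
    have hh := K.hh
    set U := T.biUnion K.edges with hU
    have hUm : ∀ i < K.h, P i ∈ U → ∃ g ∈ T, g i = P i := by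
      intro i hi hm
      obtain ⟨g, hg, hge⟩ := Finset.mem_biUnion.1 hm
      obtain ⟨j, hj, hje⟩ := K.mem_edges.1 hge
      have := K.pos (hpT g hg).1 hP hj hi hje
      subst this
      exact ⟨g, hg, hje⟩
    have hmU : ∀ g ∈ T, ∀ i < K.h, g i ∈ U := fun g hg i hi =>
      Finset.mem_biUnion.2 ⟨g, hg, K.mem_edges.2 ⟨i, hi, rfl⟩⟩
    -- there is a new edge
    have hnew : ∃ a < K.h, P a ∉ U := by
      by_contra hcon
      push Not at hcon
      have hsuf : ∀ m ≤ K.h, ∃ g ∈ T, ∀ i < K.h, K.h - m ≤ i → g i = P i := by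
        intro m
        induction m with
        | zero =>
          intro _
          obtain ⟨g, hg⟩ := hT
          exact ⟨g, hg, fun i h1 h2 => by omega⟩
        | succ m ihm =>
          intro hm
          obtain ⟨g, hg, hgs⟩ := ihm (by omega)
          set a := K.h - (m + 1) with ha
          have hah : a < K.h := by omega
          obtain ⟨g2, hg2, hg2e⟩ := hUm a hah (hcon a hah)
          by_cases h1 : g a = P a
          · refine ⟨g, hg, fun i hi hai => ?_⟩
            rcases Nat.eq_or_lt_of_le hai with h | h
            · rw [← h]; exact h1
            · exact hgs i hi (by omega)
          · refine ⟨g2, hg2, fun i hi hai => ?_⟩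
            rcases Nat.eq_or_lt_of_le hai with h | h
            · rw [← h]; exact hg2e
            · by_contra hne
              have hgi := hgs i hi (by omega)
              have hne' : g i ≠ g2 i := by rw [hgi]; exact fun h => hne h.symm
              obtain ⟨b, hb1, hb2, hb3, hb4⟩ := K.last_diff (hpT g hg).1 (hpT g2 hg2).1
                ((hpT g hg).2.trans (hpT g2 hg2).2.symm) hi hne'
              refine K.two (hpT g hg).1 (hpT g2 hg2).1 (a := a) (b := b) (by omega) hb2 ?_ ?_ hb3 hb4
              · rw [hg2e]; exact h1
              · rw [hg2e, (hpT g hg).1.2 a (by omega), hP.2 a (by omega),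
                  hgs (a + 1) (by omega) (by omega)]
      obtain ⟨g, hg, hge⟩ := hsuf K.h le_rfl
      have : g = P := hdist g (Finset.mem_cons_of_mem hg) P (Finset.mem_cons_self _ _)
        (fun i hi => hge i hi (by omega))
      exact hPT (this ▸ hg)
    -- last new edge
    have hlast : ∃ a < K.h, P a ∉ U ∧ K.hd (P a) ∈ U.image K.hd := by
      obtain ⟨a, ha, haU⟩ := hnew
      obtain ⟨n, hn⟩ : ∃ n, n = K.h - a := ⟨_, rfl⟩
      induction n generalizing a with
      | zero => omega
      | succ n ihn =>
        by_cases hl : a + 1 < K.h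
        · by_cases he : P (a + 1) ∈ U
          · obtain ⟨g, hg, hge⟩ := hUm _ hl he
            refine ⟨a, ha, haU, ?_⟩
            rw [hP.2 a hl, ← hge, ← (hpT g hg).1.2 a hl]
            exact Finset.mem_image_of_mem _ (hmU g hg a ha)
          · exact ihn (a + 1) hl he (by omega)
        · have : a = K.h - 1 := by omega
          obtain ⟨g, hg⟩ := hT
          refine ⟨a, ha, haU, ?_⟩
          rw [this, hPv, ← (hpT g hg).2]
          exact Finset.mem_image_of_mem _ (hmU g hg _ (by omega))
    obtain ⟨a, ha, haU, haX⟩ := hlast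
    have hcons : (Finset.cons P T hPT).biUnion K.edges = U ∪ (K.edges P \ U) := by
      ext e
      simp only [Finset.mem_biUnion, Finset.mem_cons, Finset.mem_union, Finset.mem_sdiff, hU]
      constructor
      · rintro ⟨g, rfl | hg, he⟩
        · by_cases h : ∃ a ∈ T, e ∈ K.edges a
          · exact Or.inl h
          · exact Or.inr ⟨he, h⟩
        · exact Or.inl ⟨g, hg, he⟩
      · rintro (⟨g, hg, he⟩ | ⟨he, -⟩)
        · exact ⟨g, Or.inr hg, he⟩
        · exact ⟨P, Or.inl rfl, he⟩
    rw [hcons, Finset.card_union_of_disjoint Finset.disjoint_sdiff, Finset.card_cons]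
    set N := K.edges P \ U with hN
    have haN : P a ∈ N := Finset.mem_sdiff.2 ⟨K.mem_edges.2 ⟨a, ha, rfl⟩, haU⟩
    have hsub : (U ∪ N).image K.hd ⊆ U.image K.hd ∪ (N.erase (P a)).image K.hd := by
      intro x hx
      obtain ⟨e, he, rfl⟩ := Finset.mem_image.1 hx
      rcases Finset.mem_union.1 he with he | he
      · exact Finset.mem_union_left _ (Finset.mem_image_of_mem _ he)
      · by_cases h1 : e = P a
        · rw [h1]; exact Finset.mem_union_left _ haX
        · exact Finset.mem_union_right _ (Finset.mem_image_of_mem _ (Finset.mem_erase.2 ⟨h1, he⟩))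
    have c1 := (Finset.card_le_card hsub).trans (Finset.card_union_le _ _)
    have c2 : ((N.erase (P a)).image K.hd).card ≤ _ := Finset.card_image_le
    have c3 := Finset.card_erase_add_one haN
    omega

theorem few (v : V) (T : Finset (ℕ → ι))
    (hp : ∀ g ∈ T, K.IsPath K.h g ∧ K.hd (g (K.h - 1)) = v)
    (hdist : ∀ g ∈ T, ∀ g' ∈ T, (∀ i < K.h, g i = g' i) → g = g') : T.card ≤ K.Q - K.c := by
  by_contra hcon
  obtain ⟨T', hT', hc'⟩ := Finset.exists_subset_card_eq (show K.Q - K.c + 1 ≤ T.card by omega)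
  have hne : T'.Nonempty := Finset.card_pos.1 (by omega)
  have hp' : ∀ g ∈ T', K.IsPath K.h g ∧ K.hd (g (K.h - 1)) = v := fun g hg => hp g (hT' hg)
  have hex := K.excess v T' hne hp' (fun g hg g' hg' => hdist g (hT' hg) g' (hT' hg'))
  have hlv : ∀ e ∈ T'.biUnion K.edges, 1 ≤ K.lv (K.hd e) := by
    intro e he
    obtain ⟨g, hg, hge⟩ := Finset.mem_biUnion.1 he
    exact K.edge_lv (hp' g hg).1 hge
  refine K.extQ ((T'.biUnion K.edges).image K.hd) (T'.biUnion K.edges) ?_ ?_ hlv ?_ (by omega) ?_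
  · intro x hx
    obtain ⟨e, he, rfl⟩ := Finset.mem_image.1 hx
    exact hlv e he
  · intro x hx
    obtain ⟨e, he, rfl⟩ := Finset.mem_image.1 hx
    exact K.hdS e
  · intro e he
    obtain ⟨g, hg, hge⟩ := Finset.mem_biUnion.1 he
    exact K.edge_ends (hp' g hg).1 (fun e he => Finset.mem_image_of_mem _
      (Finset.mem_biUnion.2 ⟨g, hg, he⟩)) hge
  · rw [← hc']
    exact Finset.card_biUnion_le_card_mul _ _ _ (fun g _ => K.card_edges g)

/-- ancestor sets -/
theorem anc (par : V → ι)
    (hpar : ∀ v, 1 ≤ K.lv v → K.lv v ≤ K.h → K.hd (par v) = v ∧ K.lv (K.tl (par v)) + 1 = K.lv v)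
    (v : V) (hv : K.lv v ≤ K.h) : ∃ A : Finset V, A.card ≤ K.lv v ∧ (1 ≤ K.lv v → v ∈ A) ∧
      (∀ x ∈ A, 1 ≤ K.lv x ∧ K.lv x ≤ K.h) ∧ (∀ x ∈ A, K.tl (par x) ∈ K.W ∪ A) := by
  obtain ⟨n, hn⟩ : ∃ n, n = K.lv v := ⟨_, rfl⟩
  induction n generalizing v with
  | zero => exact ⟨∅, by simp, by omega, by simp, by simp⟩
  | succ n ih =>
    obtain ⟨h1, h2⟩ := hpar v (by omega) hv
    obtain ⟨A, hA1, hA2, hA3, hA4⟩ := ih (K.tl (par v)) (by omega) (by omega)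
    refine ⟨insert v A, ?_, fun _ => Finset.mem_insert_self _ _, ?_, ?_⟩
    · have := Finset.card_insert_le v A
      omega
    · intro x hx
      rcases Finset.mem_insert.1 hx with rfl | hx
      · omega
      · exact hA3 x hx
    · intro x hx
      rcases Finset.mem_insert.1 hx with rfl | hx
      · by_cases h0 : 1 ≤ K.lv (K.tl (par x))
        · exact Finset.mem_union_right _ (Finset.mem_insert_of_mem (hA2 h0))
        · exact Finset.mem_union_left _ ((K.hW _).1 (by omega))
      · rcases Finset.mem_union.1 (hA4 x hx) with h | h
        · exact Finset.mem_union_left _ h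
        · exact Finset.mem_union_right _ (Finset.mem_insert_of_mem h)

theorem nonforward (u : V) (hu1 : 1 ≤ K.lv u) (huh : K.lv u < K.h) :
    (Finset.univ.filter (fun e => (K.tl e = u ∧ K.lv (K.hd e) = K.lv u) ∨ K.hd e = u)).card
      ≤ K.Q - K.c := by
  classical
  by_contra hcon
  have hex : ∀ v, ∃ e, 1 ≤ K.lv v → K.lv v ≤ K.h → K.hd e = v ∧ K.lv (K.tl e) + 1 = K.lv v := by
    intro v
    by_cases h1 : 1 ≤ K.lv v ∧ K.lv v ≤ K.h
    · obtain ⟨e, he⟩ := K.hpar v h1.1 h1.2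
      exact ⟨e, fun _ _ => he⟩
    · obtain ⟨e, he⟩ := K.hpar u hu1 huh.le
      exact ⟨e, fun a b => absurd ⟨a, b⟩ h1⟩
  choose par hpar using hex
  have hanc : ∀ v, ∃ A : Finset V, K.lv v ≤ K.h → A.card ≤ K.lv v ∧ (1 ≤ K.lv v → v ∈ A) ∧
      (∀ x ∈ A, 1 ≤ K.lv x ∧ K.lv x ≤ K.h) ∧ (∀ x ∈ A, K.tl (par x) ∈ K.W ∪ A) := by
    intro v
    by_cases h1 : K.lv v ≤ K.h
    · obtain ⟨A, hA⟩ := K.anc par hpar v h1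
      exact ⟨A, fun _ => hA⟩
    · exact ⟨∅, fun h => absurd h h1⟩
  choose A hA using hanc
  set B := Finset.univ.filter (fun e => (K.tl e = u ∧ K.lv (K.hd e) = K.lv u) ∨ K.hd e = u) with hB
  have hcard : K.Q - K.c ≤ (B.erase (par u)).card := by
    have := Finset.pred_card_le_card_erase (s := B) (a := par u)
    omega
  obtain ⟨G, hGB, hG⟩ := Finset.exists_subset_card_eq hcard
  set o : ι → V := fun e => if K.hd e = u then K.tl e else K.hd e with ho
  have hGm : ∀ e ∈ G, e ≠ par u ∧ ((K.tl e = u ∧ K.lv (K.hd e) = K.lv u) ∨ K.hd e = u) := by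
    intro e he
    have := hGB he
    simpa [hB] using this
  have hol : ∀ e ∈ G, K.lv (o e) ≤ K.lv u := by
    intro e he
    have := K.hle e
    simp only [ho]
    rcases (hGm e he).2 with ⟨h1, h2⟩ | h
    · split_ifs with h3
      · rw [h1]
      · omega
    · rw [if_pos h]; rw [h] at this; exact this
  set X := A u ∪ G.biUnion (fun e => A (o e)) with hX
  have hXA : ∀ x ∈ X, ∃ y, K.lv y ≤ K.h ∧ x ∈ A y ∧ A y ⊆ X := by
    intro x hx
    rcases Finset.mem_union.1 hx with h | h
    · exact ⟨u, huh.le, h, Finset.subset_union_left⟩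
    · obtain ⟨e, he, hxe⟩ := Finset.mem_biUnion.1 h
      refine ⟨o e, (hol e he).trans huh.le, hxe, fun z hz => ?_⟩
      exact Finset.mem_union_right _ (Finset.mem_biUnion.2 ⟨e, he, hz⟩)
  have hXlv : ∀ x ∈ X, 1 ≤ K.lv x ∧ K.lv x ≤ K.h := by
    intro x hx
    obtain ⟨y, hy, hxy, -⟩ := hXA x hx
    exact (hA y hy).2.2.1 x hxy
  have hXhd : ∀ x ∈ X, K.hd (par x) = x := fun x hx =>
    (hpar x (hXlv x hx).1 (hXlv x hx).2).1
  have hinj : (X.image par).card = X.card := by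
    apply Finset.card_image_of_injOn
    intro x hx y hy hxy
    rw [← hXhd x hx, ← hXhd y hy]
    exact congrArg K.hd hxy
  have hdisj : Disjoint (X.image par) G := by
    rw [Finset.disjoint_left]
    intro e he heG
    obtain ⟨x, hx, rfl⟩ := Finset.mem_image.1 he
    obtain ⟨h1, h2⟩ := hGm _ heG
    have h3 := hpar x (hXlv x hx).1 (hXlv x hx).2
    rcases h2 with ⟨h4, h5⟩ | h4
    · rw [h4] at h3; rw [h3.1] at h5; omega
    · rw [h3.1] at h4; subst h4; exact h1 rfl
  have hXc : X.card ≤ (K.Q - K.c + 1) * K.lv u := by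
    have h1 := Finset.card_union_le (A u) (G.biUnion (fun e => A (o e)))
    have h2 : (G.biUnion (fun e => A (o e))).card ≤ G.card * K.lv u :=
      Finset.card_biUnion_le_card_mul _ _ _ (fun e he =>
        ((hA (o e) ((hol e he).trans huh.le)).1).trans (hol e he))
    have h3 := (hA u huh.le).1
    rw [hG] at h2
    rw [add_mul, one_mul, hX]
    omega
  have hUc : (X.image par ∪ G).card = X.card + (K.Q - K.c) := by
    rw [Finset.card_union_of_disjoint hdisj, hinj, hG]
  have hmem : ∀ y, K.lv y ≤ K.h → A y ⊆ X → y ∈ K.W ∪ X := by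
    intro y hy hyX
    by_cases h0 : 1 ≤ K.lv y
    · exact Finset.mem_union_right _ (hyX ((hA y hy).2.1 h0))
    · exact Finset.mem_union_left _ ((K.hW _).1 (by omega))
  have huX : u ∈ K.W ∪ X := hmem u huh.le Finset.subset_union_left
  have hoX : ∀ e ∈ G, o e ∈ K.W ∪ X := by
    intro e he
    refine hmem _ ((hol e he).trans huh.le) (fun z hz => ?_)
    exact Finset.mem_union_right _ (Finset.mem_biUnion.2 ⟨e, he, hz⟩)
  refine K.extQ X (X.image par ∪ G) (fun x hx => (hXlv x hx).1) ?_ ?_ ?_ hUc.ge ?_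
  · intro x hx
    rw [← hXhd x hx]; exact K.hdS _
  · intro e he
    rcases Finset.mem_union.1 he with he | he
    · obtain ⟨x, hx, rfl⟩ := Finset.mem_image.1 he
      rw [hXhd x hx]; exact (hXlv x hx).1
    · rcases (hGm e he).2 with ⟨h1, h2⟩ | h
      · omega
      · rw [h]; exact hu1
  · intro e he
    rcases Finset.mem_union.1 he with he | he
    · obtain ⟨x, hx, rfl⟩ := Finset.mem_image.1 he
      refine ⟨?_, by rw [hXhd x hx]; exact Finset.mem_union_right _ hx⟩
      obtain ⟨y, hy, hxy, hyX⟩ := hXA x hx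
      rcases Finset.mem_union.1 ((hA y hy).2.2.2 x hxy) with h | h
      · exact Finset.mem_union_left _ h
      · exact Finset.mem_union_right _ (hyX h)
    · have h1 := hoX e he
      simp only [ho] at h1
      rcases (hGm e he).2 with ⟨h2, h3⟩ | h
      · rw [if_neg (fun h => K.hne e (h2.trans h.symm))] at h1
        exact ⟨h2 ▸ huX, h1⟩
      · rw [if_pos h] at h1
        exact ⟨h1, h ▸ huX⟩
  · rw [hUc]
    calc X.card + (K.Q - K.c) ≤ (K.Q - K.c + 1) * K.lv u + (K.Q - K.c + 1) := by omega
      _ = (K.Q - K.c + 1) * (K.lv u + 1) := by ring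
      _ ≤ _ := Nat.mul_le_mul_left _ huh

theorem forward (u : V) (hu1 : 1 ≤ K.lv u) (huh : K.lv u < K.h) :
    K.D ≤ (Finset.univ.filter (fun e => K.tl e = u ∧ K.lv (K.hd e) = K.lv u + 1)).card := by
  obtain ⟨e, he, -⟩ := K.hpar u hu1 huh.le
  have h1 := K.deg {u} (by rw [Finset.singleton_subset_iff, ← he]; exact K.hdS e) (by simp)
  have h2 := K.nonforward u hu1 huh
  have h3 : (Finset.univ.filter (fun e => K.tl e ∈ ({u} : Finset V) ∨ K.hd e ∈ ({u} : Finset V))) ⊆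
      (Finset.univ.filter (fun e => K.tl e = u ∧ K.lv (K.hd e) = K.lv u + 1)) ∪
      (Finset.univ.filter (fun e => (K.tl e = u ∧ K.lv (K.hd e) = K.lv u) ∨ K.hd e = u)) := by
    intro e
    simp only [Finset.mem_singleton, Finset.mem_filter, Finset.mem_univ, true_and, Finset.mem_union]
    have a := K.hle e
    have b := K.hlip e
    rintro (h | h)
    · rw [h] at a b
      have : K.lv (K.hd e) = K.lv u ∨ K.lv (K.hd e) = K.lv u + 1 := by omega
      tauto
    · tauto
  have h4 := (Finset.card_le_card h3).trans (Finset.card_union_le _ _)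
  have h5 : (Finset.univ.filter (fun e => K.tl e ∈ ({u} : Finset V) ∨ K.hd e ∈ ({u} : Finset V))).card
      ≤ (Finset.univ.filter (fun e => K.tl e = u ∧ K.lv (K.hd e) = K.lv u + 1)).card + K.Q := by omega
  have h6 : ((Finset.univ.filter (fun e => K.tl e ∈ ({u} : Finset V) ∨
      K.hd e ∈ ({u} : Finset V))).card : ℝ)
      ≤ (Finset.univ.filter (fun e => K.tl e = u ∧ K.lv (K.hd e) = K.lv u + 1)).card + K.Q := by
    exact_mod_cast h5
  simp only [Finset.card_singleton, Nat.cast_one, mul_one] at h1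
  linarith

theorem forward0 :
    K.D ≤ (Finset.univ.filter (fun e => K.lv (K.tl e) = 0 ∧ K.lv (K.hd e) = 1)).card := by
  have h1 := K.deg K.W K.WS K.Wne
  have h2 := K.inside
  have h3 : (Finset.univ.filter (fun e => K.tl e ∈ K.W ∨ K.hd e ∈ K.W)) ⊆
      (Finset.univ.filter (fun e => K.lv (K.tl e) = 0 ∧ K.lv (K.hd e) = 1)) ∪
      (Finset.univ.filter (fun e => K.lv (K.hd e) = 0)) := by
    intro e
    simp only [← K.hW, Finset.mem_filter, Finset.mem_univ, true_and, Finset.mem_union]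
    have a := K.hle e
    have b := K.hlip e
    omega
  have h4 := (Finset.card_le_card h3).trans (Finset.card_union_le _ _)
  have h5 : ((Finset.univ.filter (fun e => K.tl e ∈ K.W ∨ K.hd e ∈ K.W)).card : ℝ) + 1
      ≤ (Finset.univ.filter (fun e => K.lv (K.tl e) = 0 ∧ K.lv (K.hd e) = 1)).card
        + K.W.card + K.c := by
    norm_cast; omega
  have h6 : (1 : ℝ) ≤ K.W.card := by exact_mod_cast K.Wne.card_pos
  have h7 : (K.c : ℝ) + 1 ≤ K.Q := by exact_mod_cast K.hc
  have h8 := K.hD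
  have h9 : (0 : ℝ) ≤ K.c := by positivity
  nlinarith [mul_nonneg (show 0 ≤ K.D + K.Q - 1 by linarith) (show (0 : ℝ) ≤ K.W.card - 1 by linarith)]

theorem paths (e0 : ι) (m : ℕ) (hm : m ≤ K.h) : ∃ P : Finset (ℕ → ι), K.D ^ m ≤ P.card ∧
    ∀ g ∈ P, K.IsPath m g ∧ ∀ i, m ≤ i → g i = e0 := by
  classical
  induction m with
  | zero =>
    refine ⟨{fun _ => e0}, by simp, ?_⟩
    intro g hg
    rw [Finset.mem_singleton] at hg
    subst hg
    exact ⟨⟨fun i hi => by omega, fun i hi => by omega⟩, fun _ _ => rfl⟩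
  | succ m ih =>
    obtain ⟨P, hP1, hP2⟩ := ih (by omega)
    set X : (ℕ → ι) → Finset ι := fun g => Finset.univ.filter (fun e =>
      K.lv (K.tl e) = m ∧ K.lv (K.hd e) = m + 1 ∧ (m = 0 ∨ K.hd (g (m - 1)) = K.tl e)) with hX
    have hXc : ∀ g ∈ P, K.D ≤ (X g).card := by
      intro g hg
      rcases m with _ | m
      · simpa [hX] using K.forward0
      · have h1 := ((hP2 g hg).1.1 m (by omega)).2
        have h2 := K.forward (K.hd (g m)) (by omega) (by omega)
        refine h2.trans ?_
        norm_cast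
        apply Finset.card_le_card
        intro e
        simp only [hX, Finset.mem_filter, Finset.mem_univ, true_and]
        rintro ⟨h3, h4⟩
        rw [h3]
        refine ⟨h1, by omega, Or.inr (by simp)⟩
    refine ⟨(P.sigma X).image (fun s => Function.update s.1 m s.2), ?_, ?_⟩
    · rw [Finset.card_image_of_injOn, Finset.card_sigma, pow_succ]
      · push_cast
        calc K.D ^ m * K.D ≤ P.card * K.D := mul_le_mul_of_nonneg_right hP1 K.hD
          _ = ∑ g ∈ P, K.D := by simp
          _ ≤ _ := Finset.sum_le_sum hXc
      · rintro ⟨g, e⟩ hs ⟨g', e'⟩ hs' heq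
        simp only [Finset.coe_sigma, Set.mem_sigma_iff, Finset.mem_coe] at hs hs'
        simp only at heq
        have he : e = e' := by simpa using congrFun heq m
        have hg : g = g' := by
          funext i
          by_cases him : i = m
          · subst him
            rw [(hP2 g hs.1).2 i le_rfl, (hP2 g' hs'.1).2 i le_rfl]
          · simpa [Function.update_of_ne him] using congrFun heq i
        subst he; subst hg; rfl
    · intro g' hg'
      obtain ⟨⟨g, e⟩, hs, rfl⟩ := Finset.mem_image.1 hg'
      rw [Finset.mem_sigma] at hs
      obtain ⟨hg, he⟩ := hs
      simp only [hX, Finset.mem_filter, Finset.mem_univ, true_and] at he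
      obtain ⟨⟨p1, p2⟩, p3⟩ := hP2 g hg
      refine ⟨⟨fun i hi => ?_, fun i hi => ?_⟩, fun i hi => ?_⟩
      · by_cases him : i = m
        · subst him; simp only [Function.update_self]; exact ⟨he.1, he.2.1⟩
        · simp only [Function.update_of_ne him]; exact p1 i (by omega)
      · by_cases him : i + 1 = m
        · subst him
          have : i ≠ i + 1 := by omega
          simp only [Function.update_self, Function.update_of_ne this]
          simpa using he.2.2
        · have : i ≠ m := by omega
          simp only [Function.update_of_ne him, Function.update_of_ne this]
          exact p2 i (by omega)
      · have : i ≠ m := by omega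
        simp only [Function.update_of_ne this]
        exact p3 i (by omega)

theorem main : K.D ^ K.h < K.Q * Fintype.card V := by
  classical
  have hQ : (1 : ℝ) ≤ K.Q := by exact_mod_cast (show 1 ≤ K.Q by have := K.hc; omega)
  have hW1 := K.Wne.card_pos
  have hne : Nonempty ι := by
    have h1 := K.deg K.W K.WS K.Wne
    by_contra hcon
    rw [not_nonempty_iff] at hcon
    simp only [Finset.univ_eq_empty, Finset.filter_empty, Finset.card_empty, Nat.cast_zero] at h1
    have h6 : (1 : ℝ) ≤ K.W.card := by exact_mod_cast hW1
    have := K.hD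
    nlinarith
  obtain ⟨e0⟩ := hne
  obtain ⟨P, hP1, hP2⟩ := K.paths e0 K.h le_rfl
  have hh := K.hh
  have hmaps : ∀ g ∈ P, K.hd (g (K.h - 1)) ∈ Finset.univ \ K.W := by
    intro g hg
    rw [Finset.mem_sdiff, ← K.hW, ((hP2 g hg).1.1 (K.h - 1) (by omega)).2]
    exact ⟨Finset.mem_univ _, by omega⟩
  have hcard := Finset.card_le_mul_card_image_of_maps_to hmaps (K.Q - K.c) (by
    intro v _
    apply K.few v
    · intro g hg
      rw [Finset.mem_filter] at hg
      exact ⟨(hP2 g hg.1).1, hg.2⟩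
    · intro g hg g' hg' heq
      rw [Finset.mem_filter] at hg hg'
      funext i
      by_cases hi : i < K.h
      · exact heq i hi
      · rw [(hP2 g hg.1).2 i (by omega), (hP2 g' hg'.1).2 i (by omega)])
  have h1 : (Finset.univ \ K.W).card + 1 ≤ Fintype.card V := by
    have := Finset.card_sdiff_add_card_eq_card (Finset.subset_univ K.W)
    rw [Finset.card_univ] at this
    omega
  have h2 : P.card < K.Q * Fintype.card V := by
    have hc := K.hc
    calc P.card ≤ (K.Q - K.c) * (Finset.univ \ K.W).card := hcard
      _ ≤ K.Q * (Finset.univ \ K.W).card := Nat.mul_le_mul_right _ (by omega)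
      _ < K.Q * Fintype.card V := Nat.mul_lt_mul_of_pos_left (by omega) (by omega)
  exact hP1.trans_lt (by exact_mod_cast h2)

end Ctx
theorem exists_lv {V ι : Type} [DecidableEq V] (ends : ι → Finset V) (W : Finset V) (h : ℕ) :
    ∃ lv : V → ℕ, (∀ v, lv v = 0 ↔ v ∈ W) ∧ (∀ v, lv v ≤ h + 1) ∧
      (∀ e, ∀ x ∈ ends e, ∀ y ∈ ends e, lv y ≤ lv x + 1) ∧
      (∀ v, 1 ≤ lv v → lv v ≤ h → ∃ e, v ∈ ends e ∧ ∃ x ∈ ends e, lv x + 1 = lv v) := by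
  classical
  induction h with
  | zero =>
    refine ⟨fun v => if v ∈ W then 0 else 1, ?_, ?_, ?_, ?_⟩
    · intro v; simp
    · intro v; dsimp only; split_ifs <;> omega
    · intro e x _ y _; dsimp only; split_ifs <;> omega
    · intro v h1 h2; omega
  | succ h ih =>
    obtain ⟨lv, h1, h2, h3, h4⟩ := ih
    refine ⟨fun v => if lv v ≤ h then lv v else
      if ∃ e, v ∈ ends e ∧ ∃ x ∈ ends e, lv x = h then h + 1 else h + 2, ?_, ?_, ?_, ?_⟩
    · intro v
      rw [← h1]
      dsimp only
      by_cases hv : lv v ≤ h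
      · rw [if_pos hv]
      · rw [if_neg hv]
        have : (if ∃ e, v ∈ ends e ∧ ∃ x ∈ ends e, lv x = h then h + 1 else h + 2) ≠ 0 := by
          split_ifs <;> simp
        exact ⟨fun h' => absurd h' this, fun h' => by omega⟩
    · intro v; dsimp only; split_ifs <;> omega
    · intro e x hx y hy
      have a := h3 e x hx y hy
      have b := h2 y
      dsimp only
      by_cases hy1 : lv y ≤ h
      · rw [if_pos hy1]; split_ifs <;> omega
      · rw [if_neg hy1]
        by_cases hx1 : lv x ≤ h
        · have hxh : lv x = h := by omega
          rw [if_pos ⟨e, hy, x, hx, hxh⟩, if_pos hx1]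
          omega
        · rw [if_neg hx1]
          split_ifs <;> omega
    · intro v hv1 hv2
      dsimp only at hv1 hv2 ⊢
      by_cases hv : lv v ≤ h
      · rw [if_pos hv] at hv1 hv2 ⊢
        obtain ⟨e, he, x, hx, hxl⟩ := h4 v hv1 hv
        exact ⟨e, he, x, hx, by rw [if_pos (by omega)]; exact hxl⟩
      · rw [if_neg hv] at hv1 hv2 ⊢
        by_cases hc : ∃ e, v ∈ ends e ∧ ∃ x ∈ ends e, lv x = h
        · rw [if_pos hc]
          obtain ⟨e, he, x, hx, hxl⟩ := hc
          exact ⟨e, he, x, hx, by rw [if_pos (by omega)]; omega⟩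
        · rw [if_neg hc] at hv2; omega

def GoodC {V ι : Type} (ends : ι → Finset V) (S : Finset V) (h c : ℕ) : Prop :=
  ∃ (W : Finset V) (F : Finset ι), W.Nonempty ∧ W ⊆ S ∧ (∀ e ∈ F, ends e ⊆ W) ∧
    W.card + c ≤ F.card + 1 ∧ F.card ≤ c * h

theorem core {V ι : Type} [Fintype V] [DecidableEq V] [Fintype ι] [DecidableEq ι]
    (ends : ι → Finset V) (h2 : ∀ e, (ends e).card = 2) (Q h : ℕ) (hQ : 1 ≤ Q) (hh : 1 ≤ h)
    (S : Finset V) (hS : S.Nonempty) (hES : ∀ e, ends e ⊆ S) (D : ℝ) (hD : 0 ≤ D)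
    (hcond : ∀ I : Finset ι, Q + 1 ≤ I.card → I.card ≤ (Q + 1) * h →
      I.card + 2 ≤ (I.biUnion ends).card + Q)
    (hdeg : ∀ A ⊆ S, A.Nonempty →
      (D + Q) * A.card ≤ (Finset.univ.filter (fun e => ∃ x ∈ ends e, x ∈ A)).card) :
    D ^ h < Q * Fintype.card V := by
  classical
  have fact : ∀ (W : Finset V) (F : Finset ι), W.Nonempty → (∀ e ∈ F, ends e ⊆ W) →
      W.card + Q ≤ F.card + 1 → F.card ≤ (Q + 1) * h → False := by
    intro W F hW hF h3 h4
    have hW1 := hW.card_pos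
    have hF1 : F.Nonempty := Finset.card_pos.1 (by omega)
    obtain ⟨e, he⟩ := hF1
    have hW2 := Finset.card_le_card (hF e he)
    rw [h2] at hW2
    have h5 := hcond F (by omega) h4
    have h6 : (F.biUnion ends).card ≤ W.card :=
      Finset.card_le_card (Finset.biUnion_subset.2 hF)
    omega
  have good0 : GoodC ends S h 0 := by
    obtain ⟨s, hs⟩ := hS
    exact ⟨{s}, ∅, by simp, by simpa using hs, by simp, by simp, by simp⟩
  have goodlt : ∀ c ≤ Q + 1, GoodC ends S h c → c < Q := by
    rintro c hc ⟨W, F, hW, hWS, hF, h3, h4⟩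
    by_contra hcon
    exact fact W F hW hF (by omega) (h4.trans (Nat.mul_le_mul_right _ hc))
  obtain ⟨c, hcQ, hcg, hc1⟩ : ∃ c, c < Q ∧ GoodC ends S h c ∧
      ∀ c', c < c' → c' ≤ Q + 1 → ¬ GoodC ends S h c' := by
    have hg := Nat.findGreatest_spec (P := GoodC ends S h) (Nat.zero_le (Q + 1)) good0
    refine ⟨_, goodlt _ (Nat.findGreatest_le _) hg, hg, fun c' h3 h4 => ?_⟩
    exact Nat.findGreatest_is_greatest h3 h4
  have ng1 := hc1 (c + 1) (by omega) (by omega)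
  have ng2 := hc1 (c + 2) (by omega) (by omega)
  obtain ⟨W, F, hW, hWS, hF, hF1, hF2⟩ := hcg
  obtain ⟨lv, l0, l1, l2, l3⟩ := exists_lv ends W h
  have hor : ∀ e, ∃ p : V × V, ends e = {p.1, p.2} ∧ p.1 ≠ p.2 ∧ lv p.1 ≤ lv p.2 := by
    intro e
    obtain ⟨x, y, hxy, he⟩ := Finset.card_eq_two.1 (h2 e)
    rcases le_total (lv x) (lv y) with h | h
    · exact ⟨(x, y), he, hxy, h⟩
    · exact ⟨(y, x), by rw [he]; exact Finset.pair_comm x y, hxy.symm, h⟩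
  choose p hp1 hp2 hp3 using hor
  have mt : ∀ e, (p e).1 ∈ ends e := fun e => by rw [hp1]; simp
  have mh : ∀ e, (p e).2 ∈ ends e := fun e => by rw [hp1]; simp
  have hFin : ∀ e, lv (p e).2 = 0 ↔ ends e ⊆ W := by
    intro e
    have h3 := hp3 e
    constructor
    · intro h4
      rw [hp1, Finset.insert_subset_iff, Finset.singleton_subset_iff, ← l0, ← l0]
      omega
    · intro h4; rw [l0]; exact h4 (mh e)
  have hext : ∀ (X : Finset V) (U : Finset ι), (∀ x ∈ X, 1 ≤ lv x) → (∀ e ∈ U, 1 ≤ lv (p e).2) →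
      (∀ e ∈ U, (p e).1 ∈ W ∪ X ∧ (p e).2 ∈ W ∪ X) →
      (W ∪ X).card = W.card + X.card ∧ (F ∪ U).card = F.card + U.card ∧
      ∀ e ∈ F ∪ U, ends e ⊆ W ∪ X := by
    intro X U hX hU hUX
    refine ⟨Finset.card_union_of_disjoint ?_, Finset.card_union_of_disjoint ?_, ?_⟩
    · rw [Finset.disjoint_left]
      intro x hx hx'
      have h3 := hX x hx'
      rw [← l0] at hx
      omega
    · rw [Finset.disjoint_left]
      intro e he he'
      have h3 := hU e he'
      have := (hFin e).2 (hF e he)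
      omega
    · intro e he
      rcases Finset.mem_union.1 he with he | he
      · exact (hF e he).trans Finset.subset_union_left
      · rw [hp1, Finset.insert_subset_iff, Finset.singleton_subset_iff]
        exact hUX e he
  let K : Ctx V ι :=
    { tl := fun e => (p e).1
      hd := fun e => (p e).2
      lv := lv, W := W, S := S, c := c, Q := Q, h := h, D := D
      hle := hp3
      hlip := fun e => l2 e _ (mt e) _ (mh e)
      hne := hp2
      hW := l0
      hpar := by
        intro v hv1 hv2
        obtain ⟨e, he, x, hx, hxl⟩ := l3 v hv1 hv2
        have h3 := hp3 e
        rw [hp1] at he hx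
        simp only [Finset.mem_insert, Finset.mem_singleton] at he hx
        refine ⟨e, ?_⟩
        rcases he with rfl | rfl <;> rcases hx with rfl | rfl
        · omega
        · omega
        · exact ⟨rfl, hxl⟩
        · omega
      tlS := fun e => hES e (mt e)
      hdS := fun e => hES e (mh e)
      ext2 := by
        intro X U hX hXS hU hUX h3 h4
        obtain ⟨c1, c2, c3⟩ := hext X U hX hU hUX
        refine ng2 ⟨W ∪ X, F ∪ U, hW.mono Finset.subset_union_left,
          Finset.union_subset hWS hXS, c3, by omega, ?_⟩
        rw [c2, add_mul]
        omega
      extQ := by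
        intro X U hX hXS hU hUX h3 h4
        obtain ⟨c1, c2, c3⟩ := hext X U hX hU hUX
        refine fact (W ∪ X) (F ∪ U) (hW.mono Finset.subset_union_left) c3 (by omega) ?_
        rw [c2]
        have : (Q + 1) * h = c * h + (Q - c + 1) * h := by
          rw [← add_mul]; congr 1; omega
        omega
      inside := by
        by_contra hcon
        push Not at hcon
        obtain ⟨I, hI, hIc⟩ := Finset.exists_subset_card_eq hcon
        refine ng1 ⟨W, I, hW, hWS, ?_, by omega, ?_⟩
        · intro e he
          have := hI he
          rw [Finset.mem_filter] at this
          exact (hFin e).1 this.2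
        · rw [hIc, add_mul]; omega
      deg := by
        intro A hA hAn
        refine (hdeg A hA hAn).trans (le_of_eq ?_)
        congr 2
        ext e
        simp [hp1]
      hc := hcQ
      Wne := hW
      WS := hWS
      hD := hD
      hh := hh }
  exact K.main

theorem core2 {V ι : Type} [Fintype V] [DecidableEq V] [Nonempty V] [Fintype ι] [DecidableEq ι]
    (ends : ι → Finset V) (h2 : ∀ e, (ends e).card = 2) (Q h : ℕ) (hQ : 1 ≤ Q) (hh : 1 ≤ h)
    (D : ℝ) (hD : 0 ≤ D)
    (hcond : ∀ I : Finset ι, Q + 1 ≤ I.card → I.card ≤ (Q + 1) * h →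
      I.card + 2 ≤ (I.biUnion ends).card + Q)
    (hcard : (D + Q) * Fintype.card V ≤ Fintype.card ι) :
    D ^ h < Q * Fintype.card V := by
  classical
  set f : Finset V → ℕ := fun S => (Finset.univ.filter (fun e => ends e ⊆ S)).card with hf
  set 𝒮 : Finset (Finset V) :=
    Finset.univ.filter (fun S => S.Nonempty ∧ (D + Q) * S.card ≤ f S) with h𝒮
  have hne : 𝒮.Nonempty := by
    refine ⟨Finset.univ, ?_⟩
    simp only [h𝒮, Finset.mem_filter, Finset.mem_univ, true_and]
    refine ⟨Finset.univ_nonempty, ?_⟩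
    simpa [hf] using hcard
  obtain ⟨S, hS, hmin⟩ := Finset.exists_min_image 𝒮 Finset.card hne
  simp only [h𝒮, Finset.mem_filter, Finset.mem_univ, true_and] at hS hmin
  obtain ⟨hSn, hSd⟩ := hS
  refine core (ι := {e : ι // ends e ⊆ S}) (fun e => ends e.1) (fun e => h2 _) Q h hQ hh S hSn
    (fun e => e.2) D hD ?_ ?_
  · intro I hI1 hI2
    have := hcond (I.map (Function.Embedding.subtype _)) (by simpa using hI1) (by simpa using hI2)
    rw [Finset.card_map] at this
    convert this using 3
    ext x
    simp
  · intro A hA hAn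
    have e1 : (Finset.univ.filter (fun e : {e : ι // ends e ⊆ S} => ∃ x ∈ ends e.1, x ∈ A)).card
        = (Finset.univ.filter (fun e => ends e ⊆ S ∧ ∃ x ∈ ends e, x ∈ A)).card := by
      rw [← Finset.card_map (Function.Embedding.subtype _)]
      congr 1
      ext e
      simp [and_comm]
    rw [e1]
    have e2 : f S ≤ (Finset.univ.filter (fun e => ends e ⊆ S ∧ ∃ x ∈ ends e, x ∈ A)).card
        + f (S \ A) := by
      refine (Finset.card_le_card ?_).trans (Finset.card_union_le _ _)
      intro e
      simp only [Finset.mem_filter, Finset.mem_univ, true_and, Finset.mem_union]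
      intro he
      by_cases hx : ∃ x ∈ ends e, x ∈ A
      · exact Or.inl ⟨he, hx⟩
      · right
        push Not at hx
        intro x hxe
        exact Finset.mem_sdiff.2 ⟨he hxe, hx x hxe⟩
    have e2' : (f S : ℝ) ≤ (Finset.univ.filter (fun e => ends e ⊆ S ∧ ∃ x ∈ ends e, x ∈ A)).card
        + f (S \ A) := by exact_mod_cast e2
    have e3 := Finset.card_sdiff_add_card_eq_card hA
    have e3' : ((S \ A).card : ℝ) + A.card = S.card := by exact_mod_cast e3
    have e4 : (f (S \ A) : ℝ) ≤ (D + Q) * (S \ A).card := by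
      by_cases hemp : (S \ A).Nonempty
      · by_contra hcon
        have h3 := hmin (S \ A) ⟨hemp, (not_le.1 hcon).le⟩
        have := hAn.card_pos
        omega
      · rw [Finset.not_nonempty_iff_eq_empty] at hemp
        have : f (S \ A) = 0 := by
          rw [hemp]
          simp only [hf, Finset.card_eq_zero, Finset.filter_eq_empty_iff, Finset.mem_univ,
            true_implies, Finset.subset_empty]
          intro e he
          have := h2 e
          rw [he] at this
          simp at this
        rw [this]
        simp only [Nat.cast_zero]
        positivity
    rw [← e3'] at hSd
    linarith

theorem statement10 (k n : ℕ) (q h : ℤ) (C : ℝ)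
    (hq : -1 ≤ q) (hk : 2 * q + 6 ≤ (k : ℤ)) (hn : k ≤ n)
    (hh : h = (k : ℤ) / (q + 3))
    (hC : C = ((q : ℝ) + 2) ^ ((1 : ℝ) / (h : ℝ)))
    (E : Multiset (Finset (Fin n))) (hunif : ∀ e ∈ E, e.card = 2)
    (hcode : ∀ i : ℕ, q + 3 ≤ (i : ℤ) → i ≤ k → ∀ E' ≤ E, Multiset.card E' = i →
      (i : ℤ) - q ≤ ((E'.toFinset.biUnion id).card : ℤ)) :
    (Multiset.card E : ℝ) < C * (n : ℝ) ^ ((1 : ℝ) + 1 / (h : ℝ)) + ((q : ℝ) + 2) * (n : ℝ) := by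
  by_contra hcon
  push Not at hcon
  obtain ⟨Q, hQ⟩ : ∃ Q : ℕ, (Q : ℤ) = q + 2 := ⟨(q + 2).toNat, by omega⟩
  have hQ1 : 1 ≤ Q := by omega
  have hh1 : 2 ≤ h := by
    rw [hh, Int.le_ediv_iff_mul_le (by omega)]; omega
  obtain ⟨m, rfl⟩ : ∃ m : ℕ, h = (m : ℤ) := ⟨h.toNat, by omega⟩
  have hm1 : 1 ≤ m := by omega
  have hmk : (Q + 1) * m ≤ k := by
    have h1 := Int.ediv_mul_le (k : ℤ) (show q + 3 ≠ 0 by omega)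
    rw [← hh] at h1
    have h2 : ((Q + 1 : ℕ) : ℤ) = q + 3 := by push_cast; omega
    have : (((Q + 1) * m : ℕ) : ℤ) ≤ k := by
      rw [Nat.cast_mul, h2]; linarith
    exact_mod_cast this
  have hqQ : (q : ℝ) + 2 = (Q : ℝ) := by
    have : ((Q : ℤ) : ℝ) = ((q + 2 : ℤ) : ℝ) := by rw [hQ]
    push_cast at this
    exact this.symm
  have hn0 : 0 < n := by omega
  have hnR : (0 : ℝ) < n := by exact_mod_cast hn0
  rw [hqQ] at hC hcon
  simp only [Int.cast_natCast] at hC hcon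
  have hmR : (m : ℝ) ≠ 0 := by positivity
  set D : ℝ := C * (n : ℝ) ^ ((1 : ℝ) / (m : ℝ)) with hDdef
  have hC0 : 0 ≤ C := by rw [hC]; positivity
  have hD0 : 0 ≤ D := by positivity
  have hDpow : D ^ m = Q * n := by
    rw [hDdef, mul_pow, hC, ← Real.rpow_natCast, ← Real.rpow_natCast, ← Real.rpow_mul (by positivity),
      ← Real.rpow_mul (by positivity), one_div_mul_cancel hmR, Real.rpow_one, Real.rpow_one]
  have hsplit : C * (n : ℝ) ^ ((1 : ℝ) + 1 / (m : ℝ)) = D * n := by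
    rw [hDdef, Real.rpow_add hnR, Real.rpow_one]; ring
  rw [hsplit] at hcon
  classical
  have : Nonempty (Fin n) := ⟨⟨0, hn0⟩⟩
  have hmain := core2 (V := Fin n) (ι := E.ToType) (fun e => (e.1 : Finset (Fin n)))
    (fun e => hunif _ (Multiset.coe_mem)) Q m hQ1 hm1 D hD0 ?_ ?_
  · rw [hDpow, Fintype.card_fin] at hmain
    exact lt_irrefl _ hmain
  · intro I hI1 hI2
    have hle : I.val.map (fun e : E.ToType => (e.1 : Finset (Fin n))) ≤ E := by
      calc I.val.map (fun e : E.ToType => (e.1 : Finset (Fin n)))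
          ≤ (Finset.univ : Finset E.ToType).val.map (fun e : E.ToType => (e.1 : Finset (Fin n))) :=
            Multiset.map_le_map (Finset.val_le_iff.2 (Finset.subset_univ I))
        _ = E := Multiset.map_univ_coe E
    have h1 := hcode I.card (by omega) (hI2.trans hmk) _ hle (by simp)
    have h2 : (I.val.map (fun e : E.ToType => (e.1 : Finset (Fin n)))).toFinset.biUnion id
        = I.biUnion (fun e => (e.1 : Finset (Fin n))) := by
      ext x
      simp
    rw [h2] at h1
    omega
  · rw [Fintype.card_fin, Multiset.card_coe]
    linarith
end

section
/- Let n, k, r, q be integers with r ≥ 2, q ≥ −r+1 and n ≥ k ≥ 2q+2r+2, and let C' = (q+r)^{1/⌊k/(q+r+1)⌋} (a real number). Let E be a multiset of r-element subsets (edges, possibly repeated) of an n-element vertex set such that for every integer i with q+r+1 ≤ i ≤ k, every sub-multiset of E consisting of i edges (counted with multiplicity) covers at least i−q vertices in total. Then the number of edges of E counted with multiplicity is less than (2C'/r!)·n^{r−1+1/⌊k/(q+r+1)⌋} + (2(q+r)/r!)·n^{r−1}. -/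
open Finset in
lemma cfg1 {V ι : Type*} [DecidableEq V] [DecidableEq ι] {e : ι → Finset V} {F : Finset ι} {s k : ℕ}
    (hno : ∀ B ⊆ F, s + 1 ≤ B.card → B.card ≤ k → B.card + 2 ≤ (B.biUnion e).card + s)
    (A : Finset V) (root : V) (hroot : root ∈ A) (G : V → ι)
    (inj : ∀ u ∈ A, ∀ v ∈ A, u ≠ root → v ≠ root → G u = G v → u = v)
    (hG : ∀ v ∈ A, v ≠ root → G v ∈ F ∧ e (G v) ⊆ A)
    (B : Finset ι) (hBF : B ⊆ F) (hBs : B.card = s) (hBA : ∀ f ∈ B, e f ⊆ A)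
    (hdisj : ∀ f ∈ B, ∀ v ∈ A, v ≠ root → G v ≠ f)
    (hk : (A.erase root).card + s ≤ k) (h2 : 2 ≤ A.card) : False := by
  have hc := card_erase_of_mem hroot
  have hd : Disjoint ((A.erase root).image G) B := by
    rw [disjoint_left]
    intro f hf hfB
    simp only [mem_image, mem_erase] at hf
    obtain ⟨v, ⟨hv1, hv2⟩, rfl⟩ := hf
    exact hdisj _ hfB v hv2 hv1 rfl
  have hi : ((A.erase root).image G).card = (A.erase root).card := by
    apply card_image_of_injOn
    intro u hu v hv huv
    simp only [coe_erase, Set.mem_sdiff, mem_coe, Set.mem_singleton_iff] at hu hv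
    exact inj u hu.1 v hv.1 hu.2 hv.2 huv
  have hcard := card_union_of_disjoint hd
  have h1 := hno ((A.erase root).image G ∪ B) (by
    intro f hf
    simp only [mem_union, mem_image, mem_erase] at hf
    rcases hf with ⟨v, ⟨hv1, hv2⟩, rfl⟩ | hf
    · exact (hG v hv2 hv1).1
    · exact hBF hf) (by omega) (by omega)
  have h3 : (((A.erase root).image G ∪ B).biUnion e) ⊆ A := by
    intro x hx
    simp only [mem_biUnion, mem_union, mem_image, mem_erase] at hx
    obtain ⟨f, ⟨v, ⟨hv1, hv2⟩, rfl⟩ | hf, hx⟩ := hx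
    · exact (hG v hv2 hv1).2 hx
    · exact hBA f hf hx
  have h4 := card_le_card h3
  omega

/-- closed sets -/
def ClSet {V ι : Type*} (e : ι → Finset V) (F : Finset ι) (root : V) (G : V → ι)
    (P : Finset V) : Prop :=
  root ∈ P ∧ ∀ v ∈ P, v ≠ root → G v ∈ F ∧ e (G v) ⊆ P

open Finset in
lemma cfg2 {V ι : Type*} [DecidableEq V] [DecidableEq ι] {e : ι → Finset V} {F : Finset ι} {s k : ℕ}
    (he : ∀ f ∈ F, (e f).card = 2) (hs : 1 ≤ s)
    (hno : ∀ B ⊆ F, s + 1 ≤ B.card → B.card ≤ k → B.card + 2 ≤ (B.biUnion e).card + s)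
    (U : V → Prop) (root : V) (G : V → ι)
    (inj : ∀ u v, U u → U v → u ≠ root → v ≠ root → G u = G v → u = v)
    (B : Finset ι) (hBF : B ⊆ F) (hBs : s ≤ B.card)
    (hdisj : ∀ f ∈ B, ∀ v, U v → v ≠ root → G v ≠ f)
    (a b : ℕ) (A0 : Finset V) (hA0 : ClSet e F root G A0) (hA0U : ∀ v ∈ A0, U v)
    (hA0c : A0.card ≤ a + 1)
    (hA : ∀ f ∈ B, ∃ P : Finset V, ClSet e F root G P ∧ (∀ v ∈ P, U v) ∧ P.card ≤ b + 1 ∧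
      e f ⊆ A0 ∪ P)
    (hk : a + s * b + s ≤ k) : False := by
  obtain ⟨B', hB', hB's⟩ := exists_subset_card_eq hBs
  have hA' : ∀ f, ∃ P : Finset V, f ∈ B → ClSet e F root G P ∧ (∀ v ∈ P, U v) ∧ P.card ≤ b + 1 ∧
      e f ⊆ A0 ∪ P := by
    intro f
    by_cases hf : f ∈ B
    · obtain ⟨P, hP⟩ := hA f hf
      exact ⟨P, fun _ => hP⟩
    · exact ⟨∅, fun h => absurd h hf⟩
  choose P hP using hA'
  have hAU : ∀ v ∈ A0 ∪ B'.biUnion P, U v := by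
    intro v hv
    simp only [mem_union, mem_biUnion] at hv
    rcases hv with hv | ⟨f, hf, hv⟩
    · exact hA0U v hv
    · exact (hP f (hB' hf)).2.1 v hv
  have hsub : ∀ f ∈ B', e f ⊆ A0 ∪ B'.biUnion P := by
    intro f hf
    refine (hP f (hB' hf)).2.2.2.trans ?_
    apply union_subset_union_right
    exact subset_biUnion_of_mem P hf
  refine cfg1 hno (A0 ∪ B'.biUnion P) root (mem_union_left _ hA0.1) G
    (fun u hu v hv => inj u v (hAU u hu) (hAU v hv)) ?_ B' (hB'.trans hBF) hB's hsub
    (fun f hf v hv => hdisj f (hB' hf) v (hAU v hv)) ?_ ?_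
  · intro v hv hvr
    simp only [mem_union, mem_biUnion] at hv
    rcases hv with hv | ⟨f, hf, hv⟩
    · exact ⟨(hA0.2 v hv hvr).1, (hA0.2 v hv hvr).2.trans subset_union_left⟩
    · have := (hP f (hB' hf)).1.2 v hv hvr
      refine ⟨this.1, this.2.trans ?_⟩
      exact (subset_biUnion_of_mem P hf).trans subset_union_right
  · have h1 : (A0 ∪ B'.biUnion P).erase root ⊆
        A0.erase root ∪ B'.biUnion (fun f => (P f).erase root) := by
      intro v hv
      simp only [mem_erase, mem_union, mem_biUnion] at hv ⊢
      rcases hv with ⟨h, hv | ⟨f, hf, hv⟩⟩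
      · exact Or.inl ⟨h, hv⟩
      · exact Or.inr ⟨f, hf, h, hv⟩
    have h2 := (card_le_card h1).trans (card_union_le _ _)
    have h3 : (B'.biUnion (fun f => (P f).erase root)).card ≤ B'.card * b := by
      apply card_biUnion_le_card_mul
      intro f hf
      have := hP f (hB' hf)
      rw [card_erase_of_mem this.1.1]
      omega
    have h4 := card_erase_of_mem hA0.1
    rw [hB's] at h3
    omega
  · have : B'.Nonempty := by rw [← card_pos]; omega
    obtain ⟨f, hf⟩ := this
    rw [← he f (hBF (hB' hf))]
    exact card_le_card (hsub f hf)

structure TreeInv {V ι : Type*} [DecidableEq V] (e : ι → Finset V) (F : Finset ι) (root : V) (s : ℕ) (D : ℝ)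
    (j : ℕ) (T L : Finset V) (g : V → ι) : Prop where
  sub : L ⊆ T
  inj : ∀ u ∈ T, ∀ v ∈ T, u ≠ root → v ≠ root → g u = g v → u = v
  path : ∀ y ∈ T, ∃ P ⊆ T, y ∈ P ∧ ClSet e F root g P ∧ P.card ≤ j + 1
  top : ∀ x ∈ L, ∀ v ∈ T, v ≠ root → x ∈ e (g v) → v = x
  deg : ∀ x ∈ L, D + s ≤ ((F.filter (fun f => x ∈ e f)).card : ℝ)
  size : D ^ j ≤ (L.card : ℝ)

lemma TreeInv.edge {V ι : Type*} [DecidableEq V] {e : ι → Finset V} {F : Finset ι} {root : V} {s : ℕ} {D : ℝ}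
    {j : ℕ} {T L : Finset V} {g : V → ι} (I : TreeInv e F root s D j T L g) {v : V} (hv : v ∈ T)
    (h : v ≠ root) : e (g v) ⊆ T := by
  obtain ⟨P, hPT, hvP, hP, -⟩ := I.path v hv
  exact (hP.2 v hvP h).2.trans hPT

lemma pair_of {V : Type*} [DecidableEq V] {A : Finset V} (h : A.card = 2) {x w : V} (hx : x ∈ A)
    (hw : w ∈ A) (hxw : x ≠ w) : A = {x, w} := by
  symm
  apply Finset.eq_of_subset_of_card_le
  · intro y hy
    simp only [Finset.mem_insert, Finset.mem_singleton] at hy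
    rcases hy with rfl | rfl <;> assumption
  · rw [h, Finset.card_pair hxw]

lemma other_of {V : Type*} [DecidableEq V] {A : Finset V} (h : A.card = 2) {x : V} (hx : x ∈ A) :
    ∃ w, w ≠ x ∧ A = {x, w} := by
  have : 0 < (A.erase x).card := by rw [Finset.card_erase_of_mem hx]; omega
  obtain ⟨w, hw⟩ := Finset.card_pos.1 this
  rw [Finset.mem_erase] at hw
  exact ⟨w, hw.1, pair_of h hx hw.2 hw.1.symm⟩

/-- closedness depends only on values of G on the set -/
lemma ClSet.congr {V ι : Type*} {e : ι → Finset V} {F : Finset ι} {root : V} {G G' : V → ι}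
    {P : Finset V} (h : ClSet e F root G P) (hG : ∀ v ∈ P, G' v = G v) : ClSet e F root G' P :=
  ⟨h.1, fun v hv hr => by rw [hG v hv]; exact h.2 v hv hr⟩

lemma ClSet.insert {V ι : Type*} [DecidableEq V] {e : ι → Finset V} {F : Finset ι} {root : V} {G : V → ι}
    {P : Finset V} (h : ClSet e F root G P) {w y : V} (hF : G w ∈ F) (hw : e (G w) = {y, w}) (hy : y ∈ P) :
    ClSet e F root G (Insert.insert w P) := by
  refine ⟨Finset.mem_insert_of_mem h.1, ?_⟩
  intro v hv hr
  rcases Finset.mem_insert.1 hv with rfl | hv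
  · refine ⟨hF, ?_⟩
    rw [hw]
    intro z hz
    simp only [Finset.mem_insert, Finset.mem_singleton] at hz ⊢
    rcases hz with rfl | rfl
    · exact Or.inr hy
    · exact Or.inl rfl
  · exact ⟨(h.2 v hv hr).1, (h.2 v hv hr).2.trans (Finset.subset_insert _ _)⟩

open Finset in
lemma bad1 {V ι : Type*} [DecidableEq V] [DecidableEq ι] {e : ι → Finset V} {F : Finset ι} {s k : ℕ}
    (he : ∀ f ∈ F, (e f).card = 2) (hs : 1 ≤ s)
    (hno : ∀ B ⊆ F, s + 1 ≤ B.card → B.card ≤ k → B.card + 2 ≤ (B.biUnion e).card + s)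
    {root : V} {D : ℝ} {j : ℕ} {T L : Finset V} {g : V → ι} (I : TreeInv e F root s D j T L g)
    (hk : (j + 2) * (s + 1) ≤ k) {x : V} (hx : x ∈ L) (c : V → ι)
    (hc : ∀ w ∉ T, (∃ f ∈ F, x ∈ e f ∧ w ∈ e f) → c w ∈ F ∧ ∃ y ∈ L, e (c w) = {y, w})
    (B : Finset ι) (hBF : B ⊆ F)
    (hB : ∀ f ∈ B, x ∈ e f ∧ f ≠ g x ∧ ∀ w ∉ T, w ∈ e f → c w ≠ f) : B.card < s := by
  by_contra hlt
  push Not at hlt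
  obtain ⟨P, hPT, hxP, hP, hPc⟩ := I.path x (I.sub hx)
  have hGT : ∀ v ∈ T, (fun v => if v ∈ T then g v else c v) v = g v := fun v hv => by simp [hv]
  refine cfg2 he hs hno (fun v => v ∈ T ∨ ∃ f ∈ F, x ∈ e f ∧ v ∈ e f) root
    (fun v => if v ∈ T then g v else c v) ?_ B hBF hlt ?_ j (j + 1) P
    (hP.congr fun v hv => hGT v (hPT hv)) (fun v hv => Or.inl (hPT hv)) hPc ?_ ?_
  · intro u v hu hv hur hvr huv
    by_cases huT : u ∈ T <;> by_cases hvT : v ∈ T <;> simp only [huT, hvT, if_true, if_false] at huv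
    · exact I.inj u huT v hvT hur hvr huv
    · exfalso
      obtain ⟨y, hy, hh⟩ := (hc v hvT (hv.resolve_left hvT)).2
      have := I.edge huT hur
      rw [huv, hh] at this
      exact hvT (this (by simp))
    · exfalso
      obtain ⟨y, hy, hh⟩ := (hc u huT (hu.resolve_left huT)).2
      have := I.edge hvT hvr
      rw [← huv, hh] at this
      exact huT (this (by simp))
    · obtain ⟨y, hy, hh⟩ := (hc v hvT (hv.resolve_left hvT)).2
      obtain ⟨z, hz, hh'⟩ := (hc u huT (hu.resolve_left huT)).2
      have h1 : u ∈ e (c u) := by rw [hh']; simp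
      rw [huv, hh] at h1
      simp only [mem_insert, mem_singleton] at h1
      rcases h1 with rfl | h1
      · exact absurd (I.sub hy) huT
      · exact h1
  · intro f hf v hv hvr hfv
    by_cases hvT : v ∈ T <;> simp only [hvT, if_true, if_false] at hfv
    · subst hfv
      have := I.top x hx v hvT hvr (hB _ hf).1
      subst this
      exact (hB _ hf).2.1 rfl
    · obtain ⟨y, hy, hh⟩ := (hc v hvT (hv.resolve_left hvT)).2
      refine (hB _ hf).2.2 v hvT ?_ hfv
      rw [← hfv, hh]; simp
  · intro f hf
    obtain ⟨w, hwx, hfw⟩ := other_of (he f (hBF hf)) (hB f hf).1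
    by_cases hwT : w ∈ T
    · obtain ⟨Q, hQT, hwQ, hQ, hQc⟩ := I.path w hwT
      refine ⟨Q, hQ.congr fun v hv => hGT v (hQT hv), fun v hv => Or.inl (hQT hv), by omega, ?_⟩
      rw [hfw]
      intro z hz
      simp only [mem_insert, mem_singleton, mem_union] at hz ⊢
      rcases hz with rfl | rfl
      · exact Or.inl hxP
      · exact Or.inr hwQ
    · have hwf : ∃ f ∈ F, x ∈ e f ∧ w ∈ e f := ⟨f, hBF hf, (hB f hf).1, by rw [hfw]; simp⟩
      obtain ⟨hcF, y, hy, hh⟩ := hc w hwT hwf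
      obtain ⟨Q, hQT, hyQ, hQ, hQc⟩ := I.path y (I.sub hy)
      refine ⟨insert w Q, ?_, ?_, ?_, ?_⟩
      · apply (hQ.congr fun v hv => hGT v (hQT hv)).insert (y := y) _ _ hyQ
        · simpa [hwT] using hcF
        · simpa [hwT] using hh
      · intro v hv
        rcases mem_insert.1 hv with rfl | hv
        · exact Or.inr hwf
        · exact Or.inl (hQT hv)
      · have := card_insert_le w Q
        omega
      · rw [hfw]
        intro z hz
        simp only [mem_insert, mem_singleton, mem_union] at hz ⊢
        rcases hz with rfl | rfl
        · exact Or.inl hxP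
        · exact Or.inr (Or.inl rfl)
  · nlinarith

open Finset in
lemma bad2 {V ι : Type*} [DecidableEq V] [DecidableEq ι] {e : ι → Finset V} {F : Finset ι} {s k : ℕ}
    (he : ∀ f ∈ F, (e f).card = 2) (hs : 1 ≤ s)
    (hno : ∀ B ⊆ F, s + 1 ≤ B.card → B.card ≤ k → B.card + 2 ≤ (B.biUnion e).card + s)
    {root : V} {D : ℝ} {j : ℕ} {T L : Finset V} {g : V → ι} (I : TreeInv e F root s D j T L g)
    (hk : (j + 1) * (s + 1) ≤ k) {x : V} (hx : x ∈ L)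
    (B : Finset ι) (hBF : B ⊆ F)
    (hB : ∀ f ∈ B, x ∈ e f ∧ f ≠ g x ∧ e f ⊆ T) : B.card < s := by
  by_contra hlt
  push Not at hlt
  obtain ⟨P, hPT, hxP, hP, hPc⟩ := I.path x (I.sub hx)
  refine cfg2 he hs hno (fun v => v ∈ T) root g (fun u v hu hv => I.inj u hu v hv) B hBF hlt ?_ j j P
    hP (fun v hv => hPT hv) hPc ?_ ?_
  · intro f hf v hvT hvr hfv
    subst hfv
    have := I.top x hx v hvT hvr (hB _ hf).1
    subst this
    exact (hB _ hf).2.1 rfl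
  · intro f hf
    obtain ⟨w, hwx, hfw⟩ := other_of (he f (hBF hf)) (hB f hf).1
    have hwT : w ∈ T := (hB f hf).2.2 (by rw [hfw]; simp)
    obtain ⟨Q, hQT, hwQ, hQ, hQc⟩ := I.path w hwT
    refine ⟨Q, hQ, fun v hv => hQT hv, by omega, ?_⟩
    rw [hfw]
    intro z hz
    simp only [mem_insert, mem_singleton, mem_union] at hz ⊢
    rcases hz with rfl | rfl
    · exact Or.inl hxP
    · exact Or.inr hwQ
  · nlinarith

open Finset in
lemma bad3 {V ι : Type*} [DecidableEq V] [DecidableEq ι] {e : ι → Finset V} {F : Finset ι} {s k : ℕ}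
    (he : ∀ f ∈ F, (e f).card = 2) (hs : 1 ≤ s)
    (hno : ∀ B ⊆ F, s + 1 ≤ B.card → B.card ≤ k → B.card + 2 ≤ (B.biUnion e).card + s)
    {root : V} {D : ℝ} {j : ℕ} {T L : Finset V} {g : V → ι} (I : TreeInv e F root s D j T L g)
    (hk : (j + 1) * (s + 1) ≤ k) {w : V} (hw : w ∉ T)
    (B : Finset ι) (hBF : B ⊆ F)
    (hB : ∀ f ∈ B, w ∈ e f ∧ ∃ x ∈ L, x ∈ e f) : B.card ≤ s := by
  by_contra hlt
  push Not at hlt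
  have hB' : ∀ f ∈ B, ∃ x ∈ L, e f = {x, w} := by
    intro f hf
    obtain ⟨h1, x, hx, h2⟩ := hB f hf
    exact ⟨x, hx, pair_of (he f (hBF hf)) h2 h1 (fun h => hw (h ▸ I.sub hx))⟩
  obtain ⟨f0, hf0⟩ := card_pos.1 (by omega : 0 < B.card)
  obtain ⟨y0, hy0, hfy0⟩ := hB' f0 hf0
  obtain ⟨P, hPT, hxP, hP, hPc⟩ := I.path y0 (I.sub hy0)
  have hGT : ∀ v ∈ T, (Function.update g w f0) v = g v := fun v hv => by
    rw [Function.update_of_ne]; rintro rfl; exact hw hv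
  have hGw : (Function.update g w f0) w = f0 := by simp
  refine cfg2 he hs hno (fun v => v ∈ T ∨ v = w) root (Function.update g w f0) ?_ (B.erase f0)
    ((erase_subset _ _).trans hBF) (by rw [card_erase_of_mem hf0]; omega) ?_ (j + 1) j (insert w P)
    ?_ ?_ ?_ ?_ ?_
  · have key : ∀ u ∈ T, u ≠ root → g u = f0 → False := by
      intro u hu hur h
      have := I.edge hu hur
      rw [h, hfy0] at this
      exact hw (this (by simp))
    rintro u v (hu | rfl) (hv | rfl) hur hvr huv
    · rw [hGT u hu, hGT v hv] at huv
      exact I.inj u hu v hv hur hvr huv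
    · rw [hGT u hu, hGw] at huv
      exact (key u hu hur huv).elim
    · rw [hGT v hv, hGw] at huv
      exact (key v hv hvr huv.symm).elim
    · rfl
  · rintro f hf v (hv | rfl) hvr hfv
    · rw [hGT v hv] at hfv
      have := I.edge hv hvr
      rw [hfv] at this
      exact hw (this (hB f (mem_of_mem_erase hf)).1)
    · rw [hGw] at hfv
      exact (mem_erase.1 hf).1 hfv.symm
  · exact (hP.congr fun v hv => hGT v (hPT hv)).insert (y := y0) (by rw [hGw]; exact hBF hf0)
      (by rw [hGw, hfy0]) hxP
  · intro v hv
    rcases mem_insert.1 hv with rfl | hv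
    · exact Or.inr rfl
    · exact Or.inl (hPT hv)
  · have := card_insert_le w P
    omega
  · intro f hf
    obtain ⟨y, hy, hfy⟩ := hB' f (mem_of_mem_erase hf)
    obtain ⟨Q, hQT, hyQ, hQ, hQc⟩ := I.path y (I.sub hy)
    refine ⟨Q, hQ.congr fun v hv => hGT v (hQT hv), fun v hv => Or.inl (hQT hv), by omega, ?_⟩
    rw [hfy]
    intro z hz
    simp only [mem_insert, mem_singleton, mem_union] at hz ⊢
    rcases hz with rfl | rfl
    · exact Or.inr hyQ
    · exact Or.inl (Or.inl rfl)
  · nlinarith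

open Finset in
lemma tree_step {V ι : Type*} [Fintype V] [DecidableEq V] [DecidableEq ι] {e : ι → Finset V} {F : Finset ι}
    {s k : ℕ} (he : ∀ f ∈ F, (e f).card = 2) (hs : 1 ≤ s)
    (hno : ∀ B ⊆ F, s + 1 ≤ B.card → B.card ≤ k → B.card + 2 ≤ (B.biUnion e).card + s)
    {root : V} {D : ℝ} (hD : 0 < D)
    (hdeg : ∀ f ∈ F, ∀ v ∈ e f, D + s ≤ ((F.filter (fun f => v ∈ e f)).card : ℝ))
    {j : ℕ} {T L : Finset V} {g : V → ι} (I : TreeInv e F root s D j T L g)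
    (hk : (j + 2) * (s + 1) ≤ k) :
    ∃ T' L' g', TreeInv e F root s D (j + 1) T' L' g' := by
  classical
  let Adj : V → V → Prop := fun x w => ∃ f ∈ F, e f = {x, w}
  let W : V → Finset V := fun x => univ.filter fun w =>
    w ∉ T ∧ Adj x w ∧ ∀ y ∈ L, Adj y w → y = x
  have hWmem : ∀ x w, w ∈ W x ↔ w ∉ T ∧ Adj x w ∧ ∀ y ∈ L, Adj y w → y = x := by
    intro x w; simp [W]
  have hc : ∀ x w, ∃ f, x ∈ L → w ∉ T → Adj x w →
      f ∈ F ∧ ∃ y ∈ L, e f = {y, w} ∧ (w ∉ W x → y ≠ x) := by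
    intro x w
    by_cases h : x ∈ L ∧ w ∉ T ∧ Adj x w
    · obtain ⟨hx, hw, hA⟩ := h
      by_cases hWx : w ∈ W x
      · obtain ⟨f, hf, hfe⟩ := hA
        exact ⟨f, fun _ _ _ => ⟨hf, x, hx, hfe, fun h => absurd hWx h⟩⟩
      · have : ∃ y ∈ L, Adj y w ∧ y ≠ x := by
          rw [hWmem] at hWx
          by_contra hcon
          push Not at hcon
          exact hWx ⟨hw, hA, hcon⟩
        obtain ⟨y, hy, ⟨f, hf, hfe⟩, hyx⟩ := this
        exact ⟨f, fun _ _ _ => ⟨hf, y, hy, hfe, fun _ => hyx⟩⟩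
    · exact ⟨g x, fun h1 h2 h3 => absurd ⟨h1, h2, h3⟩ h⟩
  choose c hc using hc
  have hp : ∀ w, ∃ x, w ∈ L.biUnion W → x ∈ L ∧ w ∈ W x := by
    intro w
    by_cases h : w ∈ L.biUnion W
    · obtain ⟨x, hx⟩ := mem_biUnion.1 h
      exact ⟨x, fun _ => hx⟩
    · exact ⟨w, fun h' => absurd h' h⟩
  choose p hp using hp
  have hL'T : ∀ w ∈ L.biUnion W, w ∉ T := fun w hw => ((hWmem _ _).1 (hp w hw).2).1
  let g' : V → ι := fun w => if w ∈ T then g w else c (p w) w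
  have hgT : ∀ w ∈ T, g' w = g w := fun w hw => by simp [g', hw]
  have hgL : ∀ w ∈ L.biUnion W, g' w ∈ F ∧ ∃ y ∈ L, e (g' w) = {y, w} := by
    intro w hw
    have h1 := (hWmem _ _).1 (hp w hw).2
    obtain ⟨h2, y, hy, h3, -⟩ := hc (p w) w (hp w hw).1 h1.1 h1.2.1
    have : g' w = c (p w) w := by simp [g', h1.1]
    rw [this]
    exact ⟨h2, y, hy, h3⟩
  have hWc : ∀ x ∈ L, D ≤ ((W x).card : ℝ) := by
    intro x hx
    have hxT := I.sub hx
    have hbad := bad1 he hs hno I hk hx (c x) (by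
      rintro w hw ⟨f, hf, hxf, hwf⟩
      have : Adj x w := ⟨f, hf, pair_of (he f hf) hxf hwf (fun h => hw (h ▸ hxT))⟩
      obtain ⟨h2, y, hy, h3, -⟩ := hc x w hx hw this
      exact ⟨h2, y, hy, h3⟩)
      (F.filter fun f => x ∈ e f ∧ f ≠ g x ∧ ∀ w ∉ T, w ∈ e f → c x w ≠ f) (filter_subset _ _)
      (fun f hf => (mem_filter.1 hf).2)
    have hsub : F.filter (fun f => x ∈ e f) ⊆ insert (g x)
        ((F.filter fun f => x ∈ e f ∧ f ≠ g x ∧ ∀ w ∉ T, w ∈ e f → c x w ≠ f) ∪ (W x).image (c x)) := by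
      intro f hf
      rw [mem_filter] at hf
      rw [mem_insert, mem_union, mem_filter, mem_image]
      by_cases h1 : f = g x
      · exact Or.inl h1
      right
      by_cases h2 : ∀ w ∉ T, w ∈ e f → c x w ≠ f
      · exact Or.inl ⟨hf.1, hf.2, h1, h2⟩
      right
      push Not at h2
      obtain ⟨w, hwT, hwf, hcf⟩ := h2
      refine ⟨w, ?_, hcf⟩
      by_contra hWx
      have hne : x ≠ w := fun h => hwT (h ▸ hxT)
      have : Adj x w := ⟨f, hf.1, pair_of (he f hf.1) hf.2 hwf hne⟩
      obtain ⟨h2, y, hy, h3, h4⟩ := hc x w hx hwT this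
      have hxf := hf.2
      rw [← hcf, h3] at hxf
      simp only [mem_insert, mem_singleton] at hxf
      rcases hxf with h | h
      · exact h4 hWx h.symm
      · exact hne h
    have h1 := (card_le_card hsub).trans ((card_insert_le _ _).trans
      (Nat.succ_le_succ (card_union_le _ _)))
    have h2 : ((W x).image (c x)).card ≤ (W x).card := card_image_le
    have h3 : (F.filter (fun f => x ∈ e f)).card ≤ s + (W x).card := by omega
    have h4 := I.deg x hx
    have h5 : ((F.filter (fun f => x ∈ e f)).card : ℝ) ≤ s + (W x).card := by exact_mod_cast h3
    linarith
  refine ⟨T ∪ L.biUnion W, L.biUnion W, g', ?_, ?_, ?_, ?_, ?_, ?_⟩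
  · exact subset_union_right
  · have key : ∀ u ∈ T, u ≠ root → ∀ v ∈ L.biUnion W, g' u = g' v → False := by
      intro u hu hur v hv huv
      obtain ⟨-, y, hy, h⟩ := hgL v hv
      have := I.edge hu hur
      rw [← hgT u hu, huv, h] at this
      exact hL'T v hv (this (by simp))
    intro u hu v hv hur hvr huv
    rcases mem_union.1 hu with hu | hu <;> rcases mem_union.1 hv with hv | hv
    · rw [hgT u hu, hgT v hv] at huv
      exact I.inj u hu v hv hur hvr huv
    · exact (key u hu hur v hv huv).elim
    · exact (key v hv hvr u hu huv.symm).elim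
    · obtain ⟨-, y, hy, h⟩ := hgL v hv
      obtain ⟨-, z, hz, h'⟩ := hgL u hu
      have h1 : u ∈ e (g' u) := by rw [h']; simp
      rw [huv, h] at h1
      simp only [mem_insert, mem_singleton] at h1
      rcases h1 with rfl | h1
      · exact absurd (I.sub hy) (hL'T _ hu)
      · exact h1
  · intro y hy
    rcases mem_union.1 hy with hy | hy
    · obtain ⟨P, hPT, hyP, hP, hPc⟩ := I.path y hy
      exact ⟨P, hPT.trans subset_union_left, hyP, hP.congr fun v hv => hgT v (hPT hv), by omega⟩
    · obtain ⟨hF, x, hx, h⟩ := hgL y hy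
      obtain ⟨P, hPT, hyP, hP, hPc⟩ := I.path x (I.sub hx)
      refine ⟨insert y P, ?_, mem_insert_self _ _, (hP.congr fun v hv => hgT v (hPT hv)).insert hF h hyP, ?_⟩
      · intro v hv
        rcases mem_insert.1 hv with rfl | hv
        · exact mem_union_right _ hy
        · exact mem_union_left _ (hPT hv)
      · have := card_insert_le y P
        omega
  · intro x hx v hv hvr hxv
    rcases mem_union.1 hv with hv | hv
    · rw [hgT v hv] at hxv
      exact absurd (I.edge hv hvr hxv) (hL'T x hx)
    · obtain ⟨-, y, hy, h⟩ := hgL v hv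
      rw [h] at hxv
      simp only [mem_insert, mem_singleton] at hxv
      rcases hxv with rfl | h1
      · exact absurd (I.sub hy) (hL'T _ hx)
      · exact h1.symm
  · intro x hx
    obtain ⟨hF, y, hy, h⟩ := hgL x hx
    exact hdeg _ hF x (by rw [h]; simp)
  · have hdis : (L.biUnion W).card = ∑ x ∈ L, (W x).card := by
      apply card_biUnion
      intro x hx y hy hxy
      rw [Function.onFun, disjoint_left]
      intro w hw hw'
      rw [hWmem] at hw hw'
      exact hxy (hw'.2.2 x hx hw.2.1)
    rw [hdis]
    push_cast
    calc D ^ (j + 1) = D ^ j * D := pow_succ _ _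
      _ ≤ L.card * D := by gcongr; exact I.size
      _ = ∑ x ∈ L, D := by simp
      _ ≤ _ := sum_le_sum hWc

open Finset in
lemma tree_final {V ι : Type*} [Fintype V] [DecidableEq V] [DecidableEq ι] {e : ι → Finset V} {F : Finset ι}
    {s k : ℕ} (he : ∀ f ∈ F, (e f).card = 2) (hs : 1 ≤ s)
    (hno : ∀ B ⊆ F, s + 1 ≤ B.card → B.card ≤ k → B.card + 2 ≤ (B.biUnion e).card + s)
    {root : V} {D : ℝ} (hD : 0 < D)
    {j : ℕ} {T L : Finset V} {g : V → ι} (I : TreeInv e F root s D j T L g)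
    (hk : (j + 1) * (s + 1) ≤ k) : D ^ (j + 1) < s * Fintype.card V := by
  classical
  let Out : V → Finset ι := fun x => F.filter fun f => x ∈ e f ∧ ¬ e f ⊆ T
  have hOc : ∀ x ∈ L, D ≤ ((Out x).card : ℝ) := by
    intro x hx
    have hbad := bad2 he hs hno I hk hx
      (F.filter fun f => x ∈ e f ∧ f ≠ g x ∧ e f ⊆ T) (filter_subset _ _)
      (fun f hf => (mem_filter.1 hf).2)
    have hsub : F.filter (fun f => x ∈ e f) ⊆ insert (g x)
        ((F.filter fun f => x ∈ e f ∧ f ≠ g x ∧ e f ⊆ T) ∪ Out x) := by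
      intro f hf
      simp only [Out, mem_filter, mem_insert, mem_union] at hf ⊢
      tauto
    have h1 := (card_le_card hsub).trans ((card_insert_le _ _).trans
      (Nat.succ_le_succ (card_union_le _ _)))
    have h3 : (F.filter (fun f => x ∈ e f)).card ≤ s + (Out x).card := by omega
    have h4 := I.deg x hx
    have h5 : ((F.filter (fun f => x ∈ e f)).card : ℝ) ≤ s + (Out x).card := by exact_mod_cast h3
    linarith
  have hdis : (L.biUnion Out).card = ∑ x ∈ L, (Out x).card := by
    apply card_biUnion
    intro x hx y hy hxy
    rw [Function.onFun, disjoint_left]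
    intro f hf hf'
    simp only [Out, mem_filter] at hf hf'
    apply hf.2.2
    rw [pair_of (he f hf.1) hf.2.1 hf'.2.1 hxy]
    intro z hz
    simp only [mem_insert, mem_singleton] at hz
    rcases hz with rfl | rfl
    · exact I.sub hx
    · exact I.sub hy
  have hlow : D ^ (j + 1) ≤ ((L.biUnion Out).card : ℝ) := by
    rw [hdis]
    push_cast
    calc D ^ (j + 1) = D ^ j * D := pow_succ _ _
      _ ≤ L.card * D := by gcongr; exact I.size
      _ = ∑ x ∈ L, D := by simp
      _ ≤ _ := sum_le_sum hOc
  have hsub : L.biUnion Out ⊆ Tᶜ.biUnion fun w => F.filter fun f => w ∈ e f ∧ ∃ x ∈ L, x ∈ e f := by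
    intro f hf
    obtain ⟨x, hx, hf⟩ := mem_biUnion.1 hf
    simp only [Out, mem_filter] at hf
    obtain ⟨w, hw, hwT⟩ := not_subset.1 hf.2.2
    rw [mem_biUnion]
    exact ⟨w, by simpa using hwT, mem_filter.2 ⟨hf.1, hw, x, hx, hf.2.1⟩⟩
  have hup : (L.biUnion Out).card ≤ Tᶜ.card * s := by
    refine (card_le_card hsub).trans (card_biUnion_le_card_mul _ _ _ ?_)
    intro w hw
    exact bad3 he hs hno I hk (by simpa using hw) _ (filter_subset _ _) (fun f hf => (mem_filter.1 hf).2)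
  have hLpos : 0 < L.card := by
    have : (0 : ℝ) < L.card := (pow_pos hD j).trans_le I.size
    exact_mod_cast this
  have hTpos : 0 < T.card := hLpos.trans_le (card_le_card I.sub)
  have hT := card_compl_add_card T
  have h1 : Tᶜ.card * s < s * Fintype.card V := by
    rw [mul_comm]
    apply Nat.mul_lt_mul_of_pos_left <;> omega
  have h2 : ((L.biUnion Out).card : ℝ) < s * Fintype.card V := by exact_mod_cast hup.trans_lt h1
  linarith

open Finset in
lemma min_deg_s11 {V ι : Type*} [Fintype V] [DecidableEq V] [DecidableEq ι] {e : ι → Finset V} {F : Finset ι}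
    (he : ∀ f ∈ F, (e f).card = 2) [Nonempty V] {d : ℝ} (hd : 0 < d)
    (hF : Fintype.card V * d ≤ F.card) :
    ∃ F' ⊆ F, F'.Nonempty ∧ ∀ f ∈ F', ∀ v ∈ e f, d ≤ ((F'.filter (fun f => v ∈ e f)).card : ℝ) := by
  classical
  let S : Finset (Finset V) := univ.filter fun X => X.Nonempty ∧ X.card * d ≤ ((F.filter fun f => e f ⊆ X).card : ℝ)
  have hS : S.Nonempty := ⟨univ, by simp [S]; exact hF⟩
  obtain ⟨X, hX, hmin⟩ := exists_min_image S card hS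
  simp only [S, mem_filter, mem_univ, true_and] at hX hmin
  refine ⟨F.filter fun f => e f ⊆ X, filter_subset _ _, ?_, ?_⟩
  · rw [← card_pos]
    have h1 : (0 : ℝ) < X.card := by exact_mod_cast card_pos.2 hX.1
    have : (0:ℝ) < ((F.filter fun f => e f ⊆ X).card : ℝ) := (mul_pos h1 hd).trans_le hX.2
    exact_mod_cast this
  · intro f hf v hv
    rw [mem_filter] at hf
    have hvX := hf.2 hv
    by_contra hlt
    push Not at hlt
    obtain ⟨w, hwv, hfw⟩ := other_of (he f hf.1) hv
    have hwX : w ∈ X := hf.2 (by rw [hfw]; simp)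
    have hne : (X.erase v).Nonempty := ⟨w, mem_erase.2 ⟨hwv, hwX⟩⟩
    have hsub : (F.filter fun f => e f ⊆ X) ⊆ ((F.filter fun f => e f ⊆ X).filter fun f => v ∈ e f) ∪
        (F.filter fun f => e f ⊆ X.erase v) := by
      intro f hf
      simp only [mem_filter, mem_union, subset_erase] at hf ⊢
      tauto
    have h1 := (card_le_card hsub).trans (card_union_le _ _)
    have h1' : ((F.filter fun f => e f ⊆ X).card : ℝ) ≤ (((F.filter fun f => e f ⊆ X).filter fun f => v ∈ e f).card : ℝ) +
        ((F.filter fun f => e f ⊆ X.erase v).card : ℝ) := by exact_mod_cast h1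
    have h2 : ((X.erase v).card : ℝ) = X.card - 1 := by
      rw [card_erase_of_mem hvX, Nat.cast_sub (card_pos.2 hX.1)]; simp
    have h3 := hmin (X.erase v) ⟨hne, by rw [h2]; nlinarith [hX.2]⟩
    have h4 := card_erase_lt_of_mem hvX
    omega

open Finset in
lemma graph_bound {V ι : Type*} [Fintype V] [Nonempty V] [DecidableEq V] [DecidableEq ι] {e : ι → Finset V}
    {F : Finset ι} {s k h : ℕ} (he : ∀ f ∈ F, (e f).card = 2) (hs : 1 ≤ s)
    (hno : ∀ B ⊆ F, s + 1 ≤ B.card → B.card ≤ k → B.card + 2 ≤ (B.biUnion e).card + s)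
    (hh : 1 ≤ h) (hk : h * (s + 1) ≤ k) {D : ℝ} (hD : 0 < D) (hDh : D ^ h = s * Fintype.card V) :
    (F.card : ℝ) < Fintype.card V * (D + s) := by
  by_contra hlt
  push Not at hlt
  obtain ⟨F', hF', ⟨f0, hf0⟩, hdeg⟩ := min_deg_s11 he (by positivity) hlt
  have he' : ∀ f ∈ F', (e f).card = 2 := fun f hf => he f (hF' hf)
  have hno' : ∀ B ⊆ F', s + 1 ≤ B.card → B.card ≤ k → B.card + 2 ≤ (B.biUnion e).card + s :=
    fun B hB => hno B (hB.trans hF')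
  obtain ⟨root, hroot⟩ := card_pos.1 (by rw [he' f0 hf0]; omega : 0 < (e f0).card)
  have main : ∀ j, j + 1 ≤ h → ∃ T L g, TreeInv e F' root s D j T L g := by
    intro j
    induction j with
    | zero =>
      intro _
      refine ⟨{root}, {root}, fun _ => f0, subset_rfl, ?_, ?_, ?_, ?_, ?_⟩
      · intro u hu v hv hur
        exact absurd (mem_singleton.1 hu) hur
      · intro y hy
        refine ⟨{root}, subset_rfl, hy, ⟨by simp, ?_⟩, by simp⟩
        intro v hv hvr
        exact absurd (mem_singleton.1 hv) hvr
      · intro x hx v hv hvr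
        exact absurd (mem_singleton.1 hv) hvr
      · intro x hx
        rw [mem_singleton.1 hx]
        exact hdeg f0 hf0 root hroot
      · simp
    | succ j ih =>
      intro hj
      obtain ⟨T, L, g, I⟩ := ih (by omega)
      exact tree_step he' hs hno' hD hdeg I ((Nat.mul_le_mul_right _ (by omega)).trans hk)
  obtain ⟨j, rfl⟩ : ∃ j, h = j + 1 := ⟨h - 1, by omega⟩
  obtain ⟨T, L, g, I⟩ := main j le_rfl
  have := tree_final he' hs hno' hD I hk
  linarith

open Finset in
lemma link_avg {n m r : ℕ} (E : Fin m → Finset (Fin n)) (hE : ∀ f, (E f).card = r) :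
    ∑ S ∈ powersetCard (r - 2) (univ : Finset (Fin n)), (univ.filter fun f => S ⊆ E f).card
      = m * r.choose (r - 2) := by
  simp_rw [card_filter]
  rw [sum_comm]
  have : ∀ f ∈ (univ : Finset (Fin m)), (∑ S ∈ powersetCard (r - 2) (univ : Finset (Fin n)), if S ⊆ E f then 1 else 0)
      = r.choose (r - 2) := by
    intro f _
    rw [← card_filter, ← hE f, ← card_powersetCard]
    congr 1
    ext S
    simp only [mem_filter, mem_powersetCard, subset_univ, true_and]
    tauto
  rw [sum_congr rfl this]
  simp

open Finset in
lemma hyper_bound_s11 {n m r s k h : ℕ} (E : Fin m → Finset (Fin n)) (hE : ∀ f, (E f).card = r)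
    (hr : 2 ≤ r) (hs : 1 ≤ s) (hn : 0 < n) (hh : 1 ≤ h) (hk : h * (s + 1) ≤ k)
    (hno : ∀ B : Finset (Fin m), s + 1 ≤ B.card → B.card ≤ k → B.card + r ≤ (B.biUnion E).card + s)
    {D : ℝ} (hD : 0 < D) (hDh : D ^ h = s * n) :
    (m : ℝ) < 2 * (n : ℝ) ^ (r - 2) / r.factorial * (n * (D + s)) := by
  haveI : Nonempty (Fin n) := ⟨⟨0, hn⟩⟩
  have hlink : ∀ S ∈ powersetCard (r - 2) (univ : Finset (Fin n)),
      ((univ.filter fun f => S ⊆ E f).card : ℝ) < n * (D + s) := by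
    intro S hS
    have hSc := (mem_powersetCard.1 hS).2
    have := graph_bound (V := Fin n) (e := fun f => E f \ S) (F := univ.filter fun f => S ⊆ E f)
      (s := s) (k := k) (h := h) (D := D) ?_ hs ?_ hh hk hD (by simpa using hDh)
    · simpa using this
    · intro f hf
      rw [card_sdiff_of_subset (mem_filter.1 hf).2, hE, hSc]
      omega
    · intro B hB h1 h2
      have h3 := hno B h1 h2
      have h4 : B.biUnion E ⊆ (B.biUnion fun f => E f \ S) ∪ S := by
        intro x hx
        simp only [mem_biUnion, mem_union, mem_sdiff] at hx ⊢
        obtain ⟨f, hf, hx⟩ := hx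
        by_cases hxS : x ∈ S
        · exact Or.inr hxS
        · exact Or.inl ⟨f, hf, hx, hxS⟩
      have h5 := (card_le_card h4).trans (card_union_le _ _)
      omega
  have hn' : (0 : ℝ) < n := by exact_mod_cast hn
  have hX : 0 < (n : ℝ) * (D + s) := by positivity
  have havg := link_avg E hE
  have hch : (r.choose (r - 2) : ℝ) * ((r - 2).factorial * 2) = r.factorial := by
    have := Nat.choose_mul_factorial_mul_factorial (n := r) (k := r - 2) (by omega)
    rw [show r - (r - 2) = 2 by omega] at this
    rw [← this]; push_cast; simp [mul_assoc]
  by_contra hlt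
  push Not at hlt
  have hf2 : (0 : ℝ) < (r - 2).factorial := by exact_mod_cast Nat.factorial_pos _
  have hfr : (0 : ℝ) < r.factorial := by exact_mod_cast Nat.factorial_pos _
  have h1 : (n : ℝ) ^ (r - 2) / (r - 2).factorial * (n * (D + s)) ≤ m * r.choose (r - 2) := by
    have hc : (r.choose (r - 2) : ℝ) = r.factorial / ((r - 2).factorial * 2) := by
      rw [eq_div_iff (by positivity), hch]
    calc (n : ℝ) ^ (r - 2) / (r - 2).factorial * (n * (D + s))
        = 2 * (n : ℝ) ^ (r - 2) / r.factorial * (n * (D + s)) * (r.choose (r - 2)) := by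
          rw [hc]; field_simp
      _ ≤ _ := by gcongr
  have h2 : ((n.choose (r - 2) : ℕ) : ℝ) ≤ (n : ℝ) ^ (r - 2) / (r - 2).factorial :=
    Nat.choose_le_pow_div _ _
  have havg' : ∑ S ∈ powersetCard (r - 2) (univ : Finset (Fin n)), ((univ.filter fun f => S ⊆ E f).card : ℝ)
      = m * r.choose (r - 2) := by exact_mod_cast havg
  rcases (powersetCard (r - 2) (univ : Finset (Fin n))).eq_empty_or_nonempty with h0 | h0
  · rw [h0, sum_empty] at havg'
    rw [← havg'] at h1
    have : 0 < (n : ℝ) ^ (r - 2) / (r - 2).factorial * (n * (D + s)) := by positivity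
    linarith
  · have := sum_lt_sum_of_nonempty h0 hlink
    rw [havg', sum_const, card_powersetCard, nsmul_eq_mul, card_univ, Fintype.card_fin] at this
    have h3 := mul_le_mul_of_nonneg_right h2 hX.le
    linarith


/-- For `r ≥ 2`, `q ≥ -r+1`, `n ≥ k ≥ 2q+2r+2`, `h = ⌊k/(q+r+1)⌋` and
`C' = (q+r)^{1/h}`: every multiset `E` of `r`-element subsets (edges, possibly
repeated) of an `n`-element vertex set in which, for every `q+r+1 ≤ i ≤ k`, every
sub-multiset of `i` edges (counted with multiplicity) covers at least `i-q` vertices,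
has fewer than `(2C'/r!)·n^{r-1+1/h} + (2(q+r)/r!)·n^{r-1}` edges counted with
multiplicity. -/
theorem statement11 (n k r : ℕ) (q h : ℤ) (C' : ℝ)
    (hr : 2 ≤ r) (hq : -(r : ℤ) + 1 ≤ q)
    (hk : 2 * q + 2 * r + 2 ≤ (k : ℤ)) (hn : k ≤ n)
    (hh : h = (k : ℤ) / (q + r + 1))
    (hC : C' = ((q : ℝ) + (r : ℝ)) ^ ((1 : ℝ) / (h : ℝ)))
    (E : Multiset (Finset (Fin n))) (hunif : ∀ e ∈ E, e.card = r)
    (hcode : ∀ i : ℕ, q + r + 1 ≤ (i : ℤ) → i ≤ k → ∀ E' ≤ E, Multiset.card E' = i →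
      (i : ℤ) - q ≤ ((E'.toFinset.biUnion id).card : ℤ)) :
    (Multiset.card E : ℝ) <
      (2 * C' / (r.factorial : ℝ)) * (n : ℝ) ^ ((r : ℝ) - 1 + 1 / (h : ℝ)) +
        (2 * ((q : ℝ) + (r : ℝ)) / (r.factorial : ℝ)) * (n : ℝ) ^ ((r : ℝ) - 1) := by
  obtain ⟨s, hsq⟩ : ∃ s : ℕ, (s : ℤ) = q + r := ⟨(q + r).toNat, by omega⟩
  have hs : 1 ≤ s := by omega
  have hs1 : (0 : ℤ) < s + 1 := by omega
  have hh0 : 2 ≤ h := by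
    rw [hh, ← hsq, Int.le_ediv_iff_mul_le hs1]
    linarith
  obtain ⟨H, rfl⟩ : ∃ H : ℕ, h = (H : ℤ) := ⟨h.toNat, by omega⟩
  have hkH : H * (s + 1) ≤ k := by
    have := Int.ediv_mul_le (k : ℤ) hs1.ne'
    rw [hsq, ← hh, ← hsq] at this
    exact_mod_cast this
  have hsR : (q : ℝ) + r = s := by exact_mod_cast hsq.symm
  rw [hsR] at hC
  rw [hsR]
  have hn0 : 0 < n := by omega
  have hnR : (0 : ℝ) < n := by exact_mod_cast hn0
  have hsR0 : (0 : ℝ) < s := by exact_mod_cast hs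
  have hH0 : (H : ℝ) ≠ 0 := by
    have : H ≠ 0 := by omega
    exact_mod_cast this
  obtain ⟨l, rfl⟩ : ∃ l : List (Finset (Fin n)), (l : Multiset (Finset (Fin n))) = E := Quot.exists_rep E
  have hmap : ((Finset.univ : Finset (Fin l.length)).val.map l.get) = (l : Multiset (Finset (Fin n))) := by
    simp
  have hb := hyper_bound_s11 (n := n) (m := l.length) (r := r) (s := s) (k := k) (h := H) l.get
    (fun f => hunif _ (by simp)) hr hs hn0 (by omega) hkH (by
      intro B h1 h2
      have h3 := hcode B.card (by omega) h2 (B.val.map l.get) (by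
        rw [← hmap]
        exact Multiset.map_le_map (Finset.val_le_iff.2 (Finset.subset_univ B))) (by simp)
      have h4 : (B.val.map l.get).toFinset.biUnion id = B.biUnion l.get := by
        ext x
        simp
      rw [h4] at h3
      omega)
    (D := ((s : ℝ) * n) ^ ((1 : ℝ) / H)) (by positivity) (by
      rw [← Real.rpow_natCast, ← Real.rpow_mul (by positivity), one_div, inv_mul_cancel₀ hH0,
        Real.rpow_one])
  have e1 : (n : ℝ) ^ ((r : ℝ) - 1) = (n : ℝ) ^ (r - 2) * n := by
    rw [← pow_succ, ← Real.rpow_natCast]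
    congr 1
    rw [show r - 2 + 1 = r - 1 by omega, Nat.cast_sub (by omega)]
    simp
  have hcast : (((H : ℕ) : ℤ) : ℝ) = (H : ℝ) := by simp
  rw [hcast] at hC ⊢
  rw [Real.rpow_add hnR, e1, hC]
  rw [Real.mul_rpow hsR0.le hnR.le] at hb
  rw [Multiset.coe_card]
  refine hb.trans_eq ?_
  ring
end

section
/- Let k and q be integers with q ≥ −1 and k ≥ q+3, and let G be a simple graph with at least k−q−1 vertices. Let G' = (V', E') be a subgraph of G (V' ⊆ V(G) and E' is a set of edges of G all of whose endpoints lie in V') that is forbidden for (k,q), i.e., |E'| − |V'| = q+1 and |E'| ≤ k, and assume G' is maximal forbidden: there is no forbidden subgraph G'' = (V'', E'') of G with V' ⊆ V'', E' ⊆ E'' and |V''| > |V'|. Then either |E'| = k, or G' is the union of one or more connected components of G, i.e., no edge of G joins a vertex of V' to a vertex of V(G)∖V', and every edge of G with both endpoints in V' belongs to E'. -/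
/-- Let `q ≥ -1`, `k ≥ q+3`, and let `G` be a simple graph (edge set `E`) on a finite
vertex type `V` with at least `k-q-1` vertices.  If `(V', E')` is a subgraph of `G`
that is forbidden for `(k,q)` (i.e. `|E'| - |V'| = q+1` and `|E'| ≤ k`) and is maximal
forbidden (no forbidden subgraph of `G` extends it with strictly more vertices), then
either `|E'| = k`, or `(V', E')` is a union of connected components of `G`: no edge of
`G` meets both `V'` and its complement, and every edge of `G` inside `V'` lies in `E'`. -/
theorem statement12 (k : ℕ) (q : ℤ) {V : Type*} [Fintype V] [DecidableEq V]
    (hq : -1 ≤ q) (hk : q + 3 ≤ (k : ℤ))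
    (E : Finset (Finset V)) (hG : ∀ e ∈ E, e.card = 2)
    (hV : (k : ℤ) - q - 1 ≤ (Fintype.card V : ℤ))
    (V' : Finset V) (E' : Finset (Finset V))
    (hE'sub : E' ⊆ E) (hE'V : ∀ e ∈ E', e ⊆ V')
    (hforb : (E'.card : ℤ) - (V'.card : ℤ) = q + 1 ∧ E'.card ≤ k)
    (hmax : ¬ ∃ (V'' : Finset V) (E'' : Finset (Finset V)),
      V' ⊆ V'' ∧ E' ⊆ E'' ∧ E'' ⊆ E ∧ (∀ e ∈ E'', e ⊆ V'') ∧
      ((E''.card : ℤ) - (V''.card : ℤ) = q + 1 ∧ E''.card ≤ k) ∧ V'.card < V''.card) :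
    E'.card = k ∨
      ((∀ e ∈ E, (e ∩ V').Nonempty → e ⊆ V') ∧ (∀ e ∈ E, e ⊆ V' → e ∈ E')) := by
  by_cases hc : E'.card = k
  · exact Or.inl hc
  right
  have hlt : E'.card < k := lt_of_le_of_ne hforb.2 hc
  have key : ∀ e ∈ E, e ∉ E' → ∀ v, v ∉ V' → e ⊆ insert v V' → False := by
    intro e he hne v hv hsub
    apply hmax
    have h1 : (insert e E').card = E'.card + 1 := Finset.card_insert_of_notMem hne
    have h2 : (insert v V').card = V'.card + 1 := Finset.card_insert_of_notMem hv
    refine ⟨insert v V', insert e E', Finset.subset_insert _ _, Finset.subset_insert _ _,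
      Finset.insert_subset he hE'sub, ?_, ⟨?_, ?_⟩, ?_⟩
    · intro f hf
      rcases Finset.mem_insert.1 hf with rfl | hf
      · exact hsub
      · exact (hE'V f hf).trans (Finset.subset_insert _ _)
    · rw [h1, h2]; push_cast; linarith [hforb.1]
    · omega
    · omega
  constructor
  · intro e he hne
    by_contra hns
    obtain ⟨v, hve, hv⟩ := Finset.not_subset.1 hns
    obtain ⟨u, hu⟩ := hne
    obtain ⟨hue, huV⟩ := Finset.mem_inter.1 hu
    have huv : u ≠ v := fun h => hv (h ▸ huV)
    refine key e he (fun h => hns (hE'V e h)) v hv ?_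
    have heq : ({u, v} : Finset V) = e := by
      apply Finset.eq_of_subset_of_card_le
      · intro x hx
        simp only [Finset.mem_insert, Finset.mem_singleton] at hx
        rcases hx with rfl | rfl <;> assumption
      · rw [hG e he, Finset.card_pair huv]
    rw [← heq]
    intro x hx
    simp only [Finset.mem_insert, Finset.mem_singleton] at hx ⊢
    rcases hx with rfl | rfl
    · exact Or.inr huV
    · exact Or.inl rfl
  · intro e he hsub
    by_contra hne
    have hcard : V'.card < Fintype.card V := by
      have := hforb.1
      omega
    obtain ⟨v, hv⟩ : ∃ v, v ∉ V' := by
      by_contra! h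
      rw [Finset.eq_univ_iff_forall.2 h, Finset.card_univ] at hcard
      exact lt_irrefl _ hcard
    exact key e he hne v hv (hsub.trans (Finset.subset_insert _ _))
end

section
/- Let r ≥ 3, q ≥ −r+1 and k ≥ q+r+1 be integers, and let H be an H^{(r)}(k,q)-free r-uniform hypergraph with m edges on an n-element vertex set V (n ≥ r). Then there exists an (r−2)-element subset S ⊆ V such that S is contained in at least m·binom(r,2)/binom(n,r−2) edges of H, and the simple graph G on vertex set V with edge set {e∖S : e ∈ E(H), S ⊆ e} is H^{(2)}(k, q+r−2)-free, i.e., for every integer i with q+r+1 ≤ i ≤ k, every i pairwise distinct edges of G together cover at least i−(q+r−2) vertices. -/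
/-- Let `r ≥ 3`, `q ≥ -r+1`, `k ≥ q+r+1`, and let `H` be an `H^{(r)}(k,q)`-free
`r`-uniform hypergraph with `m` edges on an `n`-element vertex set (`n ≥ r`).  Then
there is an `(r-2)`-element subset `S` of the vertices contained in at least
`m·C(r,2)/C(n,r-2)` edges of `H`, such that the graph with edge set
`{e \ S : e ∈ E(H), S ⊆ e}` is `H^{(2)}(k, q+r-2)`-free: for every
`q+r+1 ≤ i ≤ k`, every `i` pairwise distinct edges of it cover at least `i-(q+r-2)`
vertices. -/
theorem statement13 (r k n m : ℕ) (q : ℤ) {V : Type*} [Fintype V] [DecidableEq V]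
    (hr : 3 ≤ r) (hq : -(r : ℤ) + 1 ≤ q) (hk : q + r + 1 ≤ (k : ℤ))
    (hV : Fintype.card V = n) (hnr : r ≤ n)
    (E : Finset (Finset V)) (hunif : ∀ e ∈ E, e.card = r)
    (hfree : HFree r k q E) (hm : E.card = m) :
    ∃ S : Finset V, S.card = r - 2 ∧
      ((m : ℝ) * (r.choose 2 : ℝ)) / (n.choose (r - 2) : ℝ) ≤
        ((E.filter (fun e => S ⊆ e)).card : ℝ) ∧
      (∀ i : ℕ, q + r + 1 ≤ (i : ℤ) → i ≤ k →
        ∀ E' ⊆ (E.filter (fun e => S ⊆ e)).image (fun e => e \ S), E'.card = i →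
          (i : ℤ) - (q + r - 2) ≤ ((E'.biUnion id).card : ℤ)) := by
  have hsum : ∑ S ∈ Finset.powersetCard (r - 2) (Finset.univ : Finset V),
      (E.filter (fun e => S ⊆ e)).card = m * r.choose 2 := by
    have h := Finset.sum_card_bipartiteAbove_eq_sum_card_bipartiteBelow
      (s := Finset.powersetCard (r - 2) (Finset.univ : Finset V)) (t := E)
      (fun S e => S ⊆ e)
    unfold Finset.bipartiteAbove Finset.bipartiteBelow at h
    rw [h, ← hm, ← smul_eq_mul, ← Finset.sum_const]
    refine Finset.sum_congr rfl fun e he => ?_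
    have h2 : (Finset.powersetCard (r - 2) (Finset.univ : Finset V)).filter (fun S => S ⊆ e)
        = Finset.powersetCard (r - 2) e := by
      ext S
      simp [Finset.mem_powersetCard, and_comm]
    rw [h2, Finset.card_powersetCard, hunif e he]
    exact Nat.choose_symm (by omega)
  have hpos : 0 < n.choose (r - 2) := Nat.choose_pos (by omega)
  have hcard : (Finset.powersetCard (r - 2) (Finset.univ : Finset V)).card
      = n.choose (r - 2) := by
    rw [Finset.card_powersetCard, Finset.card_univ, hV]
  obtain ⟨S, hS, hle⟩ : ∃ S ∈ Finset.powersetCard (r - 2) (Finset.univ : Finset V),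
      ((m : ℝ) * (r.choose 2 : ℝ)) / (n.choose (r - 2) : ℝ) ≤
        ((E.filter (fun e => S ⊆ e)).card : ℝ) := by
    apply Finset.exists_le_of_sum_le
    · rw [← Finset.card_pos, hcard]; exact hpos
    · rw [Finset.sum_const, hcard, nsmul_eq_mul, ← Nat.cast_sum, hsum]
      have : (n.choose (r - 2) : ℝ) ≠ 0 := by exact_mod_cast hpos.ne'
      rw [mul_div_cancel₀ _ this]
      push_cast
      exact le_rfl
  have hSc : S.card = r - 2 := (Finset.mem_powersetCard.1 hS).2
  refine ⟨S, hSc, hle, ?_⟩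
  intro i hi hik E' hE' hc
  have key : ∀ f ∈ E', f ∪ S ∈ E ∧ Disjoint f S := by
    intro f hf
    obtain ⟨e, he, rfl⟩ := Finset.mem_image.1 (hE' hf)
    rw [Finset.mem_filter] at he
    rw [Finset.sdiff_union_of_subset he.2]
    exact ⟨he.1, Finset.sdiff_disjoint⟩
  have hinj : Set.InjOn (fun f => f ∪ S) (E' : Set (Finset V)) := by
    intro f hf g hg hfg
    have h1 := (key f hf).2
    have h2 := (key g hg).2
    have h3 : (f ∪ S) \ S = (g ∪ S) \ S := congrArg (· \ S) hfg
    rwa [Finset.union_sdiff_cancel_right h1, Finset.union_sdiff_cancel_right h2] at h3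
  have h := hfree i hi hik (E'.image (fun f => f ∪ S))
    (by
      intro e he
      obtain ⟨f, hf, rfl⟩ := Finset.mem_image.1 he
      exact (key f hf).1)
    (by rw [Finset.card_image_of_injOn hinj, hc])
  have hsub : (E'.image (fun f => f ∪ S)).biUnion id ⊆ E'.biUnion id ∪ S := by
    intro x hx
    simp only [Finset.mem_biUnion, Finset.mem_image, id, Finset.mem_union] at hx ⊢
    obtain ⟨_, ⟨f, hf, rfl⟩, hx⟩ := hx
    rcases Finset.mem_union.1 hx with hx | hx
    · exact Or.inl ⟨f, hf, hx⟩
    · exact Or.inr hx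
  have h4 := (Finset.card_le_card hsub).trans (Finset.card_union_le _ _)
  omega
end
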